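/- arXiv:1501.01498 — 5 statements merged into one kernel-verified Lean document; each statement's English description precedes it below -/
import Mathlib

section
/- Assume (LC): there exists L ≥ 0 such that |λ^γ(w) − λ^γ(w′)| ≤ L Σ_{γ′=1}^d |w^{γ′} − w′^{γ′}| for every γ and all w, w′ ∈ [0,1]^d. Let u = (u¹,…,u^d) be a probabilistic solution (for some initial data) such that t ↦ u(t,·) is continuous in L¹_loc(ℝ)^d. Then there exist constants C > 0 and β > 0 such that for every (τ,ξ) ∈ [0,+∞)×ℝ and all a, b ∈ ℝ with a < ξ < b, limsup_{h↓0} (1/h) ∫_{a+βh}^{b−βh} Σ_{γ=1}^d |u^γ(τ+h, x) − u^γ(τ, x − λ^γ{u}(τ,ξ)·h)| dx ≤ C · ( Σ_{γ=1}^d ( u^γ(τ, b⁻) − u^γ(τ, a) ) )². In fact one may take C = L and any β > max_γ sup_{w∈[0,1]^d} |λ^γ(w)|. -/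
open MeasureTheory Filter Set

noncomputable section

/-- A cumulative distribution function on ℝ: nondecreasing, right-continuous,
tending to `0` at `-∞` and to `1` at `+∞`. -/
def IsCDF (F : ℝ → ℝ) : Prop :=
  Monotone F ∧ (∀ x : ℝ, ContinuousWithinAt F (Ici x) x) ∧
    Tendsto F atBot (nhds 0) ∧ Tendsto F atTop (nhds 1)

/-- The pseudo-inverse `F⁻¹(v) = inf {x | v ≤ F x}` of a CDF. -/
def cdfInv (F : ℝ → ℝ) (v : ℝ) : ℝ := sInf {x : ℝ | v ≤ F x}

/-- The velocity function `λ^γ{u}(t,x)` obtained by averaging the `γ`-th coordinate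
between the left limit `u^γ(t,x⁻)` and the value `u^γ(t,x)`. -/
def lamBrace {d : ℕ} (lam : Fin d → (Fin d → ℝ) → ℝ)
    (u : Fin d → ℝ → ℝ → ℝ) (γ : Fin d) (t x : ℝ) : ℝ :=
  ∫ θ in (0:ℝ)..1,
    lam γ (Function.update (fun γ' => u γ' t x) γ
      ((1 - θ) * Function.leftLim (u γ t) x + θ * u γ t x))

/-- A test function `φ` of class `C^{1,0}_c`: continuous, compactly supported,
with continuous time derivative `φt`. -/
def IsTestFun (φ φt : ℝ → ℝ → ℝ) : Prop :=
  Continuous (fun p : ℝ × ℝ => φ p.1 p.2) ∧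
    HasCompactSupport (fun p : ℝ × ℝ => φ p.1 p.2) ∧
    Continuous (fun p : ℝ × ℝ => φt p.1 p.2) ∧
    ∀ t x : ℝ, HasDerivAt (fun s => φ s x) (φt t x) t

/-- A probabilistic solution to the diagonal hyperbolic system
`∂_t u^γ + λ^γ(u) ∂_x u^γ = 0` with initial data `u0`. -/
def IsProbSol {d : ℕ} (lam : Fin d → (Fin d → ℝ) → ℝ)
    (u : Fin d → ℝ → ℝ → ℝ) (u0 : Fin d → ℝ → ℝ) : Prop :=
  (∀ γ : Fin d, Measurable fun p : Ici (0:ℝ) × ℝ => u γ (p.1 : ℝ) p.2) ∧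
  (∀ (γ : Fin d) (t : ℝ), 0 ≤ t → IsCDF (u γ t)) ∧
  (∀ γ : Fin d, IsCDF (u0 γ)) ∧
  ∃ μ : Fin d → ℝ → Measure ℝ,
    (∀ (γ : Fin d) (t : ℝ), IsProbabilityMeasure (μ γ t)) ∧
    (∀ (γ : Fin d) (t : ℝ), 0 ≤ t → ∀ x : ℝ, (μ γ t (Iic x)).toReal = u γ t x) ∧
    ∀ φ φt : Fin d → ℝ → ℝ → ℝ, (∀ γ, IsTestFun (φ γ) (φt γ)) →
      (∑ γ : Fin d, ((∫ t in Ici (0:ℝ), ∫ x : ℝ, φt γ t x * u γ t x) +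
          ∫ x : ℝ, φ γ 0 x * u0 γ x))
        = ∑ γ : Fin d,
            ∫ t in Ici (0:ℝ), ∫ x : ℝ, φ γ t x * lamBrace lam u γ t x ∂(μ γ t)

/-- Continuity of `t ↦ u(t,·)` in `L¹_loc(ℝ)^d` on `[0,∞)`. -/
def ContL1loc {d : ℕ} (u : Fin d → ℝ → ℝ → ℝ) : Prop :=
  ∀ (γ : Fin d) (a b t₀ : ℝ), 0 ≤ t₀ →
    Tendsto (fun t => ∫ x in Icc a b, |u γ t x - u γ t₀ x|)
      (nhdsWithin t₀ (Ici 0)) (nhds 0)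

theorem FE.duality (f : ℝ → ℝ) (hf : Measurable f) (hf1 : ∀ x, |f x| ≤ 1) (A B M : ℝ) (hAB : A < B)
    (h : ∀ ψ : ℝ → ℝ, ContDiff ℝ 1 ψ → HasCompactSupport ψ → (∀ x, |ψ x| ≤ 1) →
      (∀ x, x ∉ Ioo A B → ψ x = 0) → ∫ x, ψ x * f x ≤ M) :
    ∫ x in A..B, |f x| ≤ M := by
  have hint : ∀ p q : ℝ, IntervalIntegrable (fun x => |f x|) volume p q := by
    intro p q
    refine (intervalIntegrable_const (c := (1:ℝ))).mono_fun (hf.abs.aestronglyMeasurable) ?_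
    refine Filter.Eventually.of_forall fun x => ?_
    simpa using hf1 x
  have key : ∀ ε : ℝ, 0 < ε → 2 * ε < B - A → ∫ x in (A+ε)..(B-ε), |f x| ≤ M := by
    intro ε hε hε2
    set g : ℝ → ℝ := (Icc (A+ε) (B-ε)).indicator (fun x => SignType.sign (f x) : ℝ → ℝ) with hg
    have hgm : Measurable g := by
      refine Measurable.indicator ?_ measurableSet_Icc
      have : (fun x => ((SignType.sign (f x) : SignType) : ℝ)) =
          fun x => if 0 < f x then 1 else if f x < 0 then -1 else 0 := by
        funext x
        rcases lt_trichotomy (f x) 0 with h | h | h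
        · simp [h, not_lt.2 h.le]
        · simp [h]
        · simp [h]
      rw [this]
      refine Measurable.ite (measurableSet_lt measurable_const hf) measurable_const ?_
      exact Measurable.ite (measurableSet_lt hf measurable_const) measurable_const measurable_const
    have hg1 : ∀ x, |g x| ≤ 1 := by
      intro x
      simp only [hg, indicator]
      split_ifs
      · rcases lt_trichotomy (f x) 0 with h | h | h <;> simp [h]
      · simp
    have hg0 : ∀ x, x ∉ Icc (A+ε) (B-ε) → g x = 0 := fun x hx => by simp [hg, indicator_of_notMem hx]
    have hgint : Integrable g := by
      have h1 : Integrable ((Icc (A+ε) (B-ε)).indicator (fun _ => (1:ℝ))) :=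
        (integrable_indicator_iff measurableSet_Icc).2 (by simp)
      refine h1.mono hgm.aestronglyMeasurable (Filter.Eventually.of_forall fun x => ?_)
      by_cases hx : x ∈ Icc (A+ε) (B-ε)
      · simpa [hx] using hg1 x
      · rw [hg0 x hx]; simp
    let φ : ℕ → ContDiffBump (0:ℝ) := fun n =>
      ⟨ε / (2 * (n+1)), ε / (n+1), by positivity, by
        apply div_lt_div_of_pos_left hε (by positivity); linarith [(Nat.cast_nonneg n : (0:ℝ) ≤ n)]⟩
    have hφ0 : Tendsto (fun n => (φ n).rOut) atTop (nhds 0) := by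
      exact tendsto_const_div_atTop_nhds_zero_nat ε |>.comp (tendsto_add_atTop_nat 1) |>.congr (by
        intro n; simp [φ])
    have hae := ContDiffBump.ae_convolution_tendsto_right_of_locallyIntegrable (μ := volume) (K := 2) hφ0
      (Filter.Eventually.of_forall fun n => le_of_eq (by simp only [φ]; field_simp)) hgint.locallyIntegrable
    set ψ : ℕ → ℝ → ℝ := fun n => MeasureTheory.convolution ((φ n).normed volume) g (ContinuousLinearMap.lsmul ℝ ℝ) volume with hψ
    have hψ1 : ∀ n x, |ψ n x| ≤ 1 := by
      intro n x
      have := dist_convolution_le (μ := volume) (f := (φ n).normed volume) (g := g) (x₀ := x) (z₀ := (0:ℝ)) (ε := 1)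
        (R := (φ n).rOut) zero_le_one (φ n).support_normed_eq.subset (φ n).nonneg_normed (φ n).integral_normed
        hgm.aestronglyMeasurable (fun y _ => by simpa using hg1 y)
      simpa [hψ] using this
    have hψ0 : ∀ n x, x ∉ Ioo A B → ψ n x = 0 := by
      intro n x hx
      have hr : (φ n).rOut ≤ ε := by
        simp only [φ]
        exact div_le_self hε.le (by linarith [(Nat.cast_nonneg n : (0:ℝ) ≤ n)])
      have hz : ∀ y ∈ Metric.ball x (φ n).rOut, g y = 0 := by
        intro y hy
        apply hg0
        intro hy2
        apply hx
        rw [Real.ball_eq_Ioo] at hy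
        exact ⟨by linarith [hy.2, hy2.1], by linarith [hy.1, hy2.2]⟩
      have hx0 : g x = 0 := hz x (Metric.mem_ball_self (φ n).rOut_pos)
      have := (φ n).normed_convolution_eq_right (μ := volume) (g := g) (x₀ := x) (by
        intro y hy; rw [hz y hy, hx0])
      simp only [hψ]; rw [this, hx0]
    have hψc : ∀ n, HasCompactSupport (ψ n) := fun n =>
      HasCompactSupport.intro (isCompact_Icc (a := A) (b := B)) fun x hx =>
        hψ0 n x (fun h => hx (Ioo_subset_Icc_self h))
    have hψd : ∀ n, ContDiff ℝ 1 (ψ n) := fun n =>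
      (φ n).hasCompactSupport_normed.contDiff_convolution_left (n := 1) _ (φ n).contDiff_normed hgint.locallyIntegrable
    have hle : ∀ n, ∫ x, ψ n x * f x ≤ M := fun n => h (ψ n) (hψd n) (hψc n) (hψ1 n) (hψ0 n)
    have hlim : Tendsto (fun n => ∫ x, ψ n x * f x) atTop (nhds (∫ x, g x * f x)) := by
      refine tendsto_integral_of_dominated_convergence ((Icc A B).indicator (fun _ => (1:ℝ))) ?_ ?_ ?_ ?_
      · intro n
        exact ((hψd n).continuous.measurable.mul hf).aestronglyMeasurable
      · exact (integrable_indicator_iff measurableSet_Icc).2 (by simp)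
      · intro n
        refine Filter.Eventually.of_forall fun x => ?_
        by_cases hx : x ∈ Icc A B
        · simp only [indicator_of_mem hx, norm_mul, Real.norm_eq_abs]
          exact mul_le_one₀ (hψ1 n x) (abs_nonneg _) (hf1 x)
        · rw [hψ0 n x (fun h => hx (Ioo_subset_Icc_self h))]; simp [hx]
      · filter_upwards [hae] with x hx
        exact hx.mul_const _
    have hfin := le_of_tendsto' hlim hle
    have heq : ∫ x, g x * f x = ∫ x in (A+ε)..(B-ε), |f x| := by
      rw [intervalIntegral.integral_of_le (by linarith), ← integral_Icc_eq_integral_Ioc,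
        ← integral_indicator measurableSet_Icc]
      congr 1; funext x
      by_cases hx : x ∈ Icc (A+ε) (B-ε)
      · simp only [hg, indicator_of_mem hx]
        exact sign_mul_self _
      · simp [hg, indicator_of_notMem hx]
    linarith
  have h2 : ∀ ε : ℝ, 0 < ε → 2 * ε < B - A → ∫ x in A..B, |f x| ≤ M + 2 * ε := by
    intro ε hε hε2
    have e1 := intervalIntegral.integral_add_adjacent_intervals (hint A (A+ε)) (hint (A+ε) (B-ε))
    have e2 := intervalIntegral.integral_add_adjacent_intervals (hint A (B-ε)) (hint (B-ε) B)
    have b : ∀ p : ℝ, ∫ x in p..(p+ε), |f x| ≤ ε := by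
      intro p
      calc ∫ x in p..(p+ε), |f x| ≤ ∫ x in p..(p+ε), (1:ℝ) :=
            intervalIntegral.integral_mono_on (by linarith) (hint _ _) intervalIntegrable_const
              (fun x _ => hf1 x)
        _ = ε := by simp
    have b1 := b A
    have b2 := b (B-ε)
    rw [sub_add_cancel] at b2
    linarith [key ε hε hε2]
  refine le_of_forall_pos_le_add fun ε hε => ?_
  have := h2 (min (ε/2) ((B-A)/4)) (lt_min (by linarith) (by linarith)) (by
    have := min_le_right (ε/2) ((B-A)/4); linarith)
  have := min_le_left (ε/2) ((B-A)/4)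
  linarith

theorem FE.sign (f : ℝ → ℝ) (hf : ∀ x, ContinuousWithinAt f (Ici x) x) (hfm : Measurable f)
    (hf1 : ∀ x, |f x| ≤ 1)
    (h : ∀ ψ : ℝ → ℝ, ContDiff ℝ 1 ψ → HasCompactSupport ψ → (∀ x, 0 ≤ ψ x) → ∫ x, ψ x * f x ≤ 0)
    (x : ℝ) : f x ≤ 0 := by
  by_contra hx
  push Not at hx
  have h1 : ∀ᶠ y in nhdsWithin x (Ici x), 0 < f y := (hf x).eventually (lt_mem_nhds hx)
  obtain ⟨δ, hδ, hδ2⟩ := Metric.nhdsWithin_basis_ball.eventually_iff.1 h1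
  let φ : ContDiffBump (x + δ/2) := ⟨δ/4, δ/2, by positivity, by linarith⟩
  have hpos : ∀ y, 0 ≤ φ y * f y := by
    intro y
    by_cases hy : y ∈ Metric.ball (x+δ/2) (δ/2)
    · refine mul_nonneg φ.nonneg (hδ2 ?_).le
      rw [Real.ball_eq_Ioo] at hy ⊢
      obtain ⟨h1, h2⟩ := hy
      exact ⟨⟨by linarith, by linarith⟩, by simp; linarith⟩
    · have : φ y = 0 := by
        rw [← Function.notMem_support, φ.support_eq]; exact hy
      simp [this]
  have hint : Integrable (fun y => φ y * f y) := by
    refine φ.integrable.mul_bdd (c := 1) hfm.aestronglyMeasurable ?_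
    exact Filter.Eventually.of_forall fun y => hf1 y
  have h0 := h φ φ.contDiff φ.hasCompactSupport (fun _ => φ.nonneg)
  have h3 : 0 < ∫ y, φ y * f y := by
    rw [integral_pos_iff_support_of_nonneg hpos hint]
    refine lt_of_lt_of_le ?_ (measure_mono (s := Ioo x (x+δ)) ?_)
    · simp [hδ]
    · intro y hy
      have hy' : y ∈ Metric.ball (x+δ/2) (δ/2) := by
        rw [Real.ball_eq_Ioo]; exact ⟨by linarith [hy.1], by linarith [hy.2]⟩
      have : y ∈ Function.support φ := by rw [φ.support_eq]; exact hy'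
      refine mul_ne_zero this (hδ2 ?_).ne'
      rw [Real.ball_eq_Ioo] at hy' ⊢
      exact ⟨⟨by linarith [hy.1], hy.2⟩, hy.1.le⟩
  linarith

theorem FE.ibp (F : ℝ → ℝ) (m : Measure ℝ) [IsProbabilityMeasure m]
    (hF : ∀ x, (m (Iic x)).toReal = F x) (ψ : ℝ → ℝ) (hψ : ContDiff ℝ 1 ψ) (hc : HasCompactSupport ψ) :
    ∫ x, deriv ψ x * F x = - ∫ x, ψ x ∂m := by
  have hd : Integrable (deriv ψ) := (hψ.continuous_deriv le_rfl).integrable_of_hasCompactSupport hc.deriv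
  have hms : MeasurableSet {p : ℝ × ℝ | p.2 ≤ p.1} := measurableSet_le measurable_snd measurable_fst
  calc ∫ x, deriv ψ x * F x = ∫ x, ∫ y, deriv ψ x * ({p : ℝ × ℝ | p.2 ≤ p.1}.indicator 1 (x,y)) ∂m := by
        congr 1; funext x
        rw [integral_const_mul]
        congr 1
        rw [← hF x]
        have : (fun y => ({p : ℝ × ℝ | p.2 ≤ p.1}.indicator (1 : ℝ × ℝ → ℝ) (x,y))) = (Iic x).indicator 1 := by
          funext y; simp [indicator]
        rw [this, integral_indicator_one measurableSet_Iic]; rfl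
    _ = ∫ y, (∫ x, deriv ψ x * ({p : ℝ × ℝ | p.2 ≤ p.1}.indicator 1 (x,y))) ∂m := by
        refine integral_integral_swap ?_
        have h1 : Integrable (fun p : ℝ × ℝ => deriv ψ p.1) (volume.prod m) := hd.comp_fst m
        refine h1.mul_bdd (c := 1) ((measurable_one.indicator hms).aestronglyMeasurable) ?_
        refine Filter.Eventually.of_forall fun p => ?_
        simp only [indicator]; split_ifs <;> simp
    _ = ∫ y, - ψ y ∂m := by
        congr 1; funext y
        rw [← hc.integral_Ioi_deriv_eq hψ y, ← integral_Ici_eq_integral_Ioi, ← integral_indicator measurableSet_Ici]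
        congr 1; funext x
        simp [indicator]
    _ = _ := integral_neg _

theorem FE.lemA (G : ℝ → ℝ) (hG : Continuous G) (s t M : ℝ) (hst : s < t)
    (h : ∀ η η' : ℝ → ℝ, (∀ r, HasDerivAt η (η' r) r) → Continuous η' → (∀ r, 0 ≤ η r) →
      (∀ r, r ∉ Ioo s t → η r = 0) → (∀ r, r ∉ Icc s t → η' r = 0) → 0 ≤ ∫ r, (η' r * G r + M * η r)) :
    G t - G s ≤ M * (t - s) := by
  by_contra hcon
  push Not at hcon
  set H : ℝ → ℝ := fun r => G r - M * r with hH
  have hHc : Continuous H := by fun_prop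
  have hlt : 0 < H t - H s := by simp only [hH]; linarith
  -- choose δ
  set e := (H t - H s) / 4 with he
  have he0 : 0 < e := by positivity
  obtain ⟨δ₁, hδ₁, h₁⟩ := Metric.continuousAt_iff.1 (hHc.continuousAt (x := s)) e he0
  obtain ⟨δ₂, hδ₂, h₂⟩ := Metric.continuousAt_iff.1 (hHc.continuousAt (x := t)) e he0
  set δ := min (min (δ₁/2) (δ₂/2)) (t - s) with hδ
  have hδ0 : 0 < δ := lt_min (lt_min (by linarith) (by linarith)) (by linarith)
  have d1 : δ < δ₁ := lt_of_le_of_lt ((min_le_left _ _).trans (min_le_left _ _)) (by linarith)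
  have d2 : δ < δ₂ := lt_of_le_of_lt ((min_le_left _ _).trans (min_le_right _ _)) (by linarith)
  have d3 : δ ≤ t - s := min_le_right _ _
  set q := t - s - δ with hq
  have hq0 : 0 ≤ q := by linarith
  set P : ℝ → ℝ := fun r => Real.smoothTransition ((r - s) / δ) with hP
  have hPd : ContDiff ℝ 1 P := by
    have : ContDiff ℝ (1:ℕ∞) Real.smoothTransition := Real.smoothTransition.contDiff
    exact ContDiff.comp (f := fun r => (r - s) / δ) (by simpa using this) (by fun_prop)
  have hPm : Monotone P := by
    intro x y hxy
    apply Real.smoothTransition.monotone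
    gcongr
  have hP0 : ∀ r, r ≤ s → P r = 0 := fun r hr =>
    Real.smoothTransition.zero_of_nonpos (div_nonpos_of_nonpos_of_nonneg (by linarith) hδ0.le)
  have hP1 : ∀ r, s + δ ≤ r → P r = 1 := fun r hr =>
    Real.smoothTransition.one_of_one_le ((one_le_div hδ0).2 (by linarith))
  have hPD : ∀ r, HasDerivAt P (deriv P r) r := fun r => (hPd.differentiable one_ne_zero r).hasDerivAt
  have hP'c : Continuous (deriv P) := hPd.continuous_deriv le_rfl
  have hP'0 : ∀ r, r ∉ Icc s (s+δ) → deriv P r = 0 := by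
    intro r hr
    rw [mem_Icc, not_and_or, not_le, not_le] at hr
    rcases hr with hr | hr
    · have : P =ᶠ[nhds r] fun _ => 0 := by
        filter_upwards [gt_mem_nhds hr] with y hy using hP0 y (le_of_lt hy)
      rw [this.deriv_eq]; simp
    · have : P =ᶠ[nhds r] fun _ => 1 := by
        filter_upwards [lt_mem_nhds hr] with y hy using hP1 y (le_of_lt hy)
      rw [this.deriv_eq]; simp
  have hP'n : ∀ r, 0 ≤ deriv P r := fun r => hPm.deriv_nonneg
  have hP'cs : HasCompactSupport (deriv P) := HasCompactSupport.intro isCompact_Icc hP'0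
  have hP'int : ∫ r, deriv P r = 1 := by
    have h1 : ∫ r in s..(s+δ), deriv P r = P (s+δ) - P s :=
      intervalIntegral.integral_eq_sub_of_hasDerivAt (fun r _ => hPD r) (hP'c.intervalIntegrable _ _)
    rw [hP1 _ le_rfl, hP0 _ le_rfl, intervalIntegral.integral_of_le (by linarith),
      ← integral_Icc_eq_integral_Ioc, setIntegral_eq_integral_of_forall_compl_eq_zero hP'0] at h1
    simpa using h1
  set η : ℝ → ℝ := fun r => P r - P (r - q) with hη
  set η' : ℝ → ℝ := fun r => deriv P r - deriv P (r - q) with hη'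
  have hηD : ∀ r, HasDerivAt η (η' r) r := by
    intro r
    exact (hPD r).sub ((hPD (r-q)).comp_sub_const r q)
  have hη'c : Continuous η' := by simp only [hη']; fun_prop
  have hηc : Continuous η := by
    have := hPd.continuous
    simp only [hη]; fun_prop
  have hη00 : ∀ r, r ∉ Ioo s t → η r = 0 := by
    intro r hr
    rw [mem_Ioo, not_and_or, not_lt, not_lt] at hr
    rcases hr with hr | hr
    · simp only [hη]; rw [hP0 r hr, hP0 _ (by linarith)]; simp
    · simp only [hη]; rw [hP1 r (by linarith), hP1 _ (by linarith)]; simp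
  have hη0 : ∀ r, r ∉ Icc s t → η r = 0 := fun r hr => hη00 r (fun h => hr (Ioo_subset_Icc_self h))
  have hη'0 : ∀ r, r ∉ Icc s t → η' r = 0 := by
    intro r hr
    rw [mem_Icc, not_and_or, not_le, not_le] at hr
    simp only [hη']
    rw [hP'0, hP'0]; simp
    · rintro ⟨h1, h2⟩
      rcases hr with hr | hr <;> linarith
    · rintro ⟨h1, h2⟩
      rcases hr with hr | hr <;> linarith
  have h0 := h η η' hηD hη'c (fun r => sub_nonneg.2 (hPm (by linarith))) hη00 hη'0
  have cs : ∀ (F : ℝ → ℝ), Continuous F → (∀ r, r ∉ Icc s t → F r = 0) → Integrable F := fun F hF hF0 =>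
    hF.integrable_of_hasCompactSupport (HasCompactSupport.intro isCompact_Icc hF0)
  have i1 : Integrable (fun r => η' r * H r) := cs _ (by fun_prop) (fun r hr => by rw [hη'0 r hr]; simp)
  have i2 : Integrable (fun r => M * (η' r * r + η r)) := cs _ (by fun_prop) (fun r hr => by
    rw [hη'0 r hr, hη0 r hr]; simp)
  have z : ∫ r, (η' r * r + η r) = 0 := by
    refine integral_eq_zero_of_hasDerivAt_of_integrable (f := fun r => η r * r) ?_ ?_ ?_
    · intro r
      have := (hηD r).mul (hasDerivAt_id' r)
      rw [mul_one] at this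
      exact this
    · exact cs _ (by fun_prop) (fun r hr => by rw [hη'0 r hr, hη0 r hr]; simp)
    · exact cs _ (by fun_prop) (fun r hr => by rw [hη0 r hr]; simp)
  have h3 : ∫ r, (η' r * G r + M * η r) = ∫ r, η' r * H r := by
    have : (fun r => η' r * G r + M * η r) = fun r => η' r * H r + M * (η' r * r + η r) := by
      funext r; simp only [hH]; ring
    rw [this, integral_add i1 i2, integral_const_mul, z]; simp
  rw [h3] at h0
  have i3 : ∀ F : ℝ → ℝ, Continuous F → Integrable (fun r => deriv P r * F r) := fun F hF =>
    (hP'c.mul hF).integrable_of_hasCompactSupport hP'cs.mul_right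
  have h4 : ∫ r, η' r * H r = ∫ r, deriv P r * (H r - H (r + q)) := by
    have e1 : ∫ r, deriv P (r - q) * H r = ∫ r, deriv P r * H (r + q) := by
      rw [← integral_sub_right_eq_self (fun r => deriv P r * H (r+q)) q]
      simp
    have i4 : Integrable (fun r => deriv P (r - q) * H r) := by
      have := (i3 (fun r => H (r+q)) (by fun_prop)).comp_sub_right q
      simpa using this
    simp only [hη', sub_mul, mul_sub]
    rw [integral_sub (i3 H hHc) i4, e1, integral_sub (i3 H hHc) (i3 _ (by fun_prop))]
  have h5 : ∫ r, deriv P r * (H r - H (r + q)) ≤ ∫ r, deriv P r * (-e) := by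
    refine integral_mono (i3 _ (by fun_prop)) (i3 _ continuous_const) fun r => ?_
    by_cases hr : r ∈ Icc s (s+δ)
    · refine mul_le_mul_of_nonneg_left ?_ (hP'n r)
      have a1 := h₁ (x := r) (by rw [Real.dist_eq, abs_lt]; constructor <;> linarith [hr.1, hr.2])
      have a2 := h₂ (x := r + q) (by rw [Real.dist_eq, abs_lt]; constructor <;> linarith [hr.1, hr.2])
      rw [Real.dist_eq, abs_lt] at a1 a2
      linarith [a1.2, a2.1]
    · simp [hP'0 r hr]
  rw [integral_mul_const, hP'int] at h5
  linarith

structure FE.SD (v : ℝ → ℝ → ℝ) (m : ℝ → Measure ℝ) (l : ℝ → ℝ → ℝ) : Prop where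
  vm : Measurable (fun p : ℝ × ℝ => v p.1 p.2)
  cdf : ∀ t, IsCDF (v t)
  pm : ∀ t, IsProbabilityMeasure (m t)
  hm : ∀ t x, (m t (Iic x)).toReal = v t x
  lm : Measurable (fun p : ℝ × ℝ => l p.1 p.2)
  lb : ∃ C, ∀ t x, |l t x| ≤ C
  cont : ∀ a b t₀, Tendsto (fun t => ∫ x in Icc a b, |v t x - v t₀ x|) (nhds t₀) (nhds 0)
  weak : ∀ φ φt, IsTestFun φ φt → (∀ x, φ 0 x = 0) →
    ∫ t in Ici (0:ℝ), ∫ x : ℝ, φt t x * v t x = ∫ t in Ici (0:ℝ), ∫ x : ℝ, φ t x * l t x ∂(m t)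

theorem FE.SD.bd {v : ℝ → ℝ → ℝ} {m : ℝ → Measure ℝ} {l : ℝ → ℝ → ℝ} (S : FE.SD v m l) (t x : ℝ) :
    0 ≤ v t x ∧ v t x ≤ 1 := by
  have := S.pm t
  rw [← S.hm]
  exact ⟨ENNReal.toReal_nonneg, ENNReal.toReal_le_of_le_ofReal zero_le_one (by simpa using prob_le_one)⟩

theorem FE.SD.kmeas {v : ℝ → ℝ → ℝ} {m : ℝ → Measure ℝ} {l : ℝ → ℝ → ℝ} (S : FE.SD v m l)
    (f : ℝ → ℝ → ℝ) (hf : Measurable (fun p : ℝ × ℝ => f p.1 p.2)) :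
    StronglyMeasurable (fun t => ∫ x, f t x ∂(m t)) := by
  have := S.pm
  have hmm : Measurable m := by
    refine Measurable.measure_of_isPiSystem_of_isProbabilityMeasure
      (borel_eq_generateFrom_Iic ℝ ▸ BorelSpace.measurable_eq) isPiSystem_Iic ?_
    rintro _ ⟨x, rfl⟩
    have : (fun t => m t (Iic x)) = fun t => ENNReal.ofReal (v t x) := by
      funext t
      rw [← S.hm, ENNReal.ofReal_toReal (measure_ne_top _ _)]
    rw [this]
    exact ENNReal.measurable_ofReal.comp (S.vm.comp (measurable_id.prodMk measurable_const))
  let κ : ProbabilityTheory.Kernel ℝ ℝ := ⟨m, hmm⟩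
  have : ProbabilityTheory.IsMarkovKernel κ := ⟨fun t => S.pm t⟩
  exact MeasureTheory.StronglyMeasurable.integral_kernel_prod_right' (κ := κ) (f := fun p : ℝ × ℝ => f p.1 p.2)
    hf.stronglyMeasurable

theorem FE.SD.Gcont {v : ℝ → ℝ → ℝ} {m : ℝ → Measure ℝ} {l : ℝ → ℝ → ℝ} (S : FE.SD v m l)
    (ψ : ℝ → ℝ) (hψ : Continuous ψ) (hc : HasCompactSupport ψ) (c s : ℝ) :
    Continuous (fun r => ∫ x, ψ (x - c * (r - s)) * v r x) := by
  rw [continuous_iff_continuousAt]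
  intro r0
  obtain ⟨R, hR⟩ : ∃ R, ∀ x, R < |x| → ψ x = 0 := by
    obtain ⟨R, hR⟩ := hc.isCompact.isBounded.subset_closedBall 0
    refine ⟨R, fun x hx => ?_⟩
    by_contra h
    have := hR (subset_tsupport _ h)
    simp at this
    linarith
  obtain ⟨C, hC⟩ := hψ.bounded_above_of_compact_support hc
  set Q := R + |c| * (1 + |r0 - s|) with hQ
  have hv1 : ∀ r, |r - r0| ≤ 1 → ∀ x, x ∉ Icc (-Q) Q → ψ (x - c * (r - s)) = 0 := by
    intro r hr x hx
    apply hR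
    have h1 : Q < |x| := by
      by_contra h
      exact hx (abs_le.1 (not_lt.1 h))
    have h2 : |c * (r - s)| ≤ |c| * (1 + |r0 - s|) := by
      rw [abs_mul]
      refine mul_le_mul_of_nonneg_left ?_ (abs_nonneg _)
      calc |r - s| = |(r - r0) + (r0 - s)| := by ring_nf
        _ ≤ _ := (abs_add_le _ _).trans (by linarith)
    have h3 := abs_sub_abs_le_abs_sub x (c * (r - s))
    linarith
  have hvm : ∀ r, Measurable (v r) := fun r => S.vm.comp (measurable_const.prodMk measurable_id)
  have hvi : ∀ r, IntegrableOn (v r) (Icc (-Q) Q) := by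
    intro r
    refine Measure.integrableOn_of_bounded (M := 1) (by simp) (hvm r).aestronglyMeasurable ?_
    refine Filter.Eventually.of_forall fun x => ?_
    rw [Real.norm_eq_abs, abs_of_nonneg (S.bd r x).1]; exact (S.bd r x).2
  have hψi : ∀ r, IntegrableOn (fun x => ψ (x - c * (r - s)) * v r x) (Icc (-Q) Q) := by
    intro r
    refine (hvi r).bdd_mul (c := C) (by fun_prop) ?_
    exact Filter.Eventually.of_forall fun x => hC _
  have heq : ∀ r, |r - r0| ≤ 1 → ∫ x, ψ (x - c * (r - s)) * v r x = ∫ x in Icc (-Q) Q, ψ (x - c * (r - s)) * v r x := by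
    intro r hr
    rw [setIntegral_eq_integral_of_forall_compl_eq_zero]
    intro x hx
    rw [hv1 r hr x hx]; simp
  rw [ContinuousAt, tendsto_iff_dist_tendsto_zero]
  have t1 : Tendsto (fun r => ∫ x in Icc (-Q) Q, |ψ (x - c * (r - s)) - ψ (x - c * (r0 - s))|) (nhds r0) (nhds 0) := by
    have : Continuous (fun r => ∫ x in Icc (-Q) Q, |ψ (x - c * (r - s)) - ψ (x - c * (r0 - s))|) := by
      apply continuous_parametric_integral_of_continuous (by fun_prop) isCompact_Icc
    simpa using this.tendsto r0
  have t2 : Tendsto (fun r => C * ∫ x in Icc (-Q) Q, |v r x - v r0 x|) (nhds r0) (nhds 0) := by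
    simpa using (S.cont (-Q) Q r0).const_mul C
  have t3 := t1.add t2
  rw [add_zero] at t3
  refine squeeze_zero' (Filter.Eventually.of_forall fun _ => dist_nonneg) ?_ t3
  filter_upwards [Metric.closedBall_mem_nhds r0 one_pos] with r hr
  rw [Metric.mem_closedBall, Real.dist_eq] at hr
  rw [heq r hr, heq r0 (by simp), Real.dist_eq, ← integral_sub (hψi r) (hψi r0)]
  have iA : IntegrableOn (fun x => |ψ (x - c * (r - s)) - ψ (x - c * (r0 - s))|) (Icc (-Q) Q) := by
    apply Continuous.integrableOn_Icc; fun_prop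
  have iB : IntegrableOn (fun x => |v r x - v r0 x|) (Icc (-Q) Q) := ((hvi r).sub (hvi r0)).abs
  rw [← integral_const_mul, ← integral_add iA (iB.const_mul C)]
  refine (abs_integral_le_integral_abs).trans ?_
  refine integral_mono ((hψi r).sub (hψi r0)).abs (iA.add (iB.const_mul C)) fun x => ?_
  have e : ψ (x - c * (r - s)) * v r x - ψ (x - c * (r0 - s)) * v r0 x =
    (ψ (x - c * (r - s)) - ψ (x - c * (r0 - s))) * v r x + ψ (x - c * (r0 - s)) * (v r x - v r0 x) := by ring
  simp only [e]
  refine (abs_add_le _ _).trans ?_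
  rw [abs_mul, abs_mul]
  refine add_le_add ?_ ?_
  · refine mul_le_of_le_one_right (abs_nonneg _) ?_
    rw [abs_of_nonneg (S.bd r x).1]; exact (S.bd r x).2
  · exact mul_le_mul_of_nonneg_right (hC _) (abs_nonneg _)

theorem FE.SD.T {v : ℝ → ℝ → ℝ} {m : ℝ → Measure ℝ} {l : ℝ → ℝ → ℝ} (S : FE.SD v m l)
    (ψ : ℝ → ℝ) (hψ : ContDiff ℝ 1 ψ) (hc : HasCompactSupport ψ) (c s t M : ℝ) (hs : 0 ≤ s) (hst : s < t)
    (hM : ∀ r ∈ Icc s t, ∫ x, ψ (x - c * (r - s)) * (c - l r x) ∂(m r) ≤ M) :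
    (∫ x, ψ (x - c * (t - s)) * v t x) - ∫ x, ψ x * v s x ≤ M * (t - s) := by
  have hpm := S.pm
  have hG := S.Gcont ψ hψ.continuous hc c s
  set G := fun r => ∫ x, ψ (x - c * (r - s)) * v r x with hGdef
  have hA := FE.lemA G hG s t M hst ?_
  · have : G s = ∫ x, ψ x * v s x := by simp [hGdef]
    rw [← this]; exact hA
  intro η η' hηD hη'c hηn hη0 hη'0
  have hηc : Continuous η := continuous_iff_continuousAt.2 fun r => (hηD r).continuousAt
  have hηI : ∀ r, r ∉ Icc s t → η r = 0 := fun r hr => hη0 r (fun h => hr (Ioo_subset_Icc_self h))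
  have hψc := hψ.continuous
  have hdc : Continuous (deriv ψ) := hψ.continuous_deriv le_rfl
  have hvm : ∀ r, Measurable (v r) := fun r => S.vm.comp (measurable_const.prodMk measurable_id)
  obtain ⟨C, hC⟩ := hψ.continuous.bounded_above_of_compact_support hc
  obtain ⟨R, hR⟩ : ∃ R, ∀ x, R < |x| → ψ x = 0 := by
    obtain ⟨R, hR⟩ := hc.isCompact.isBounded.subset_closedBall 0
    refine ⟨R, fun x hx => ?_⟩
    by_contra h
    have := hR (subset_tsupport _ h)
    simp at this
    linarith
  have tc : ∀ (f : ℝ → ℝ), HasCompactSupport f → ∀ a, HasCompactSupport (fun x => f (x - a)) := fun f hf a => by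
    have := hf.comp_homeomorph (Homeomorph.addRight (-a))
    simp only [sub_eq_add_neg]
    exact this
  have vi : ∀ (f : ℝ → ℝ), Continuous f → HasCompactSupport f → ∀ r, Integrable (fun x => f x * v r x) := by
    intro f hf hfc r
    refine (hf.integrable_of_hasCompactSupport hfc).mul_bdd (c := 1) (hvm r).aestronglyMeasurable ?_
    refine Filter.Eventually.of_forall fun x => ?_
    rw [Real.norm_eq_abs, abs_of_nonneg (S.bd r x).1]; exact (S.bd r x).2
  -- weak formulation
  have hw := S.weak (fun r x => η r * ψ (x - c * (r - s)))
    (fun r x => η' r * ψ (x - c * (r - s)) - c * η r * deriv ψ (x - c * (r - s))) ?_ ?_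
  rotate_left
  · refine ⟨by fun_prop, ?_, by fun_prop, ?_⟩
    · refine HasCompactSupport.intro (K := Icc s t ×ˢ Icc (-(R + |c| * (t - s))) (R + |c| * (t - s)))
        (isCompact_Icc.prod isCompact_Icc) ?_
      rintro ⟨r, x⟩ hp
      by_cases hr : r ∈ Icc s t
      · have hx : ¬ |x| ≤ R + |c| * (t - s) := fun h => hp ⟨hr, abs_le.1 h⟩
        have : ψ (x - c * (r - s)) = 0 := by
          apply hR
          have h2 : |c * (r - s)| ≤ |c| * (t - s) := by
            rw [abs_mul]
            refine mul_le_mul_of_nonneg_left ?_ (abs_nonneg _)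
            rw [abs_of_nonneg (by linarith [hr.1])]; linarith [hr.2]
          have h3 := abs_sub_abs_le_abs_sub x (c * (r - s))
          linarith
        simp [this]
      · simp [hηI r hr]
    · intro r x
      have h1 : HasDerivAt (fun r => x - c * (r - s)) (-c) r := by
        simpa using (((hasDerivAt_id r).sub_const s).const_mul c).const_sub x
      have h2 : HasDerivAt ψ (deriv ψ (x - c * (r - s))) (x - c * (r - s)) :=
        (hψ.differentiable one_ne_zero _).hasDerivAt
      have h3 := (hηD r).mul (h2.comp r h1)
      convert! h3 using 1
      simp only [Function.comp]; ring
  · intro x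
    rw [hη0 0 (fun h => absurd h.1 (not_lt.2 hs))]; simp
  set J : ℝ → ℝ := fun r => ∫ x, ψ (x - c * (r - s)) ∂(m r) with hJ
  set Λ : ℝ → ℝ := fun r => ∫ x, ψ (x - c * (r - s)) * l r x ∂(m r) with hΛ
  have hl : ∀ r, ∫ x, (η' r * ψ (x - c * (r - s)) - c * η r * deriv ψ (x - c * (r - s))) * v r x
      = η' r * G r + c * (η r * J r) := by
    intro r
    have h1 : ContDiff ℝ 1 (fun x => ψ (x - c * (r - s))) := hψ.comp (contDiff_id.sub contDiff_const)
    have h2 := FE.ibp (v r) (m r) (S.hm r) (fun x => ψ (x - c * (r - s))) h1 (tc ψ hc _)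
    have h3 : deriv (fun x => ψ (x - c * (r - s))) = fun x => deriv ψ (x - c * (r - s)) := by
      funext x; exact deriv_comp_sub_const ..
    rw [h3] at h2
    have h4 : (fun x => (η' r * ψ (x - c * (r - s)) - c * η r * deriv ψ (x - c * (r - s))) * v r x) =
      fun x => η' r * (ψ (x - c * (r - s)) * v r x) - c * η r * (deriv ψ (x - c * (r - s)) * v r x) := by
      funext x; ring
    rw [h4, integral_sub, integral_const_mul, integral_const_mul, h2]
    · simp only [hGdef, hJ]; ring
    · exact (vi _ (by fun_prop) (tc ψ hc _) r).const_mul _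
    · exact (vi _ (by fun_prop) (tc _ hc.deriv _) r).const_mul _
  have hr' : ∀ r, ∫ x, η r * ψ (x - c * (r - s)) * l r x ∂(m r) = η r * Λ r := by
    intro r
    simp only [mul_assoc]
    rw [integral_const_mul]
  simp only [hl, hr'] at hw
  obtain ⟨B, hB⟩ := S.lb
  have bm : ∀ (K : ℝ → ℝ) (D : ℝ), StronglyMeasurable K → (∀ r, |K r| ≤ D) → Integrable (fun r => η r * K r) := by
    intro K D hK hD
    refine (hηc.integrable_of_hasCompactSupport (HasCompactSupport.intro isCompact_Icc hηI)).mul_bdd (c := D)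
      hK.aestronglyMeasurable (Filter.Eventually.of_forall fun r => hD r)
  have hlr : ∀ r, Measurable (l r) := fun r => S.lm.comp (measurable_const.prodMk measurable_id)
  have C0 : 0 ≤ C := (norm_nonneg _).trans (hC 0)
  have bnd : ∀ (g : ℝ → ℝ) (D r : ℝ), (∀ x, |g x| ≤ D) → |∫ x, g x ∂(m r)| ≤ D := by
    intro g D r hg
    have := norm_integral_le_of_norm_le_const (μ := m r) (f := g) (C := D) (Filter.Eventually.of_forall hg)
    simpa using this
  have iJ : Integrable (fun r => η r * J r) := bm J C
    (S.kmeas (fun r x => ψ (x - c * (r - s))) (by fun_prop)) (fun r => bnd _ _ _ fun x => hC _)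
  have hlb : ∀ r x, |ψ (x - c * (r - s)) * l r x| ≤ C * B := by
    intro r x; rw [abs_mul]; exact mul_le_mul (hC _) (hB _ _) (abs_nonneg _) C0
  have iΛ : Integrable (fun r => η r * Λ r) := bm Λ (C * B)
    (S.kmeas (fun r x => ψ (x - c * (r - s)) * l r x) (by
      have := S.lm
      have h2 : Measurable (fun p : ℝ × ℝ => ψ (p.2 - c * (p.1 - s))) := by fun_prop
      exact h2.mul this)) (fun r => bnd _ _ _ fun x => hlb r x)
  have iG : Integrable (fun r => η' r * G r) :=
    (hη'c.mul hG).integrable_of_hasCompactSupport (HasCompactSupport.intro (isCompact_Icc (a := s) (b := t)) (fun r hr => by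
      simp [hη'0 r hr]))
  have iη : Integrable η := hηc.integrable_of_hasCompactSupport (HasCompactSupport.intro isCompact_Icc hηI)
  have hns : ∀ r, r ∉ Ici (0:ℝ) → r ∉ Icc s t := fun r hr h => hr (hs.trans h.1)
  rw [setIntegral_eq_integral_of_forall_compl_eq_zero (fun r hr => by
      rw [hηI r (hns r hr), hη'0 r (hns r hr)]; simp),
    setIntegral_eq_integral_of_forall_compl_eq_zero (fun r hr => by
      rw [hηI r (hns r hr)]; simp), integral_add iG (iJ.const_mul c)] at hw
  rw [integral_add iG (iη.const_mul M), eq_sub_of_add_eq hw, ← integral_sub iΛ (iJ.const_mul c),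
    ← integral_add (f := fun r => η r * Λ r - c * (η r * J r)) (iΛ.sub (iJ.const_mul c)) (iη.const_mul M)]
  refine integral_nonneg fun r => ?_
  have : η r * Λ r - c * (η r * J r) + M * η r = η r * (M - (c * J r - Λ r)) := by ring
  simp only [Pi.zero_apply, this]
  by_cases hr : r ∈ Icc s t
  · refine mul_nonneg (hηn r) (sub_nonneg.2 ?_)
    refine le_trans (le_of_eq ?_) (hM r hr)
    have i1 : Integrable (fun x => ψ (x - c * (r - s)) * c) (m r) := by
      refine Integrable.of_bound (C := C * |c|) (by fun_prop) (Filter.Eventually.of_forall fun x => ?_)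
      rw [norm_mul]; exact mul_le_mul_of_nonneg_right (hC _) (abs_nonneg _)
    have i2 : Integrable (fun x => ψ (x - c * (r - s)) * l r x) (m r) := by
      refine Integrable.of_bound (C := C * B) ?_ (Filter.Eventually.of_forall fun x => hlb r x)
      exact ((hψc.measurable.comp (measurable_id.sub_const _)).mul (hlr r)).aestronglyMeasurable
    simp only [mul_sub (ψ _)]
    rw [integral_sub i1 i2, integral_mul_const, mul_comm]
  · simp [hηI r hr]

theorem FE.SD.T' {v : ℝ → ℝ → ℝ} {m : ℝ → Measure ℝ} {l : ℝ → ℝ → ℝ} (S : FE.SD v m l)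
    (ψ : ℝ → ℝ) (hψ : ContDiff ℝ 1 ψ) (hc : HasCompactSupport ψ) (c s t M : ℝ) (hs : 0 ≤ s) (hst : s < t)
    (hM : ∀ r ∈ Icc s t, ∫ x, ψ (x - c * (r - s)) * (c - l r x) ∂(m r) ≤ M) :
    ∫ y, ψ y * (v t (y + c * (t - s)) - v s y) ≤ M * (t - s) := by
  have h := S.T ψ hψ hc c s t M hs hst hM
  have hvm : ∀ r, Measurable (v r) := fun r => S.vm.comp (measurable_const.prodMk measurable_id)
  have vi : ∀ r a, Integrable (fun x => ψ x * v r (x + a)) := by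
    intro r a
    refine (hψ.continuous.integrable_of_hasCompactSupport hc).mul_bdd (c := 1)
      ((hvm r).comp (measurable_id.add_const a)).aestronglyMeasurable ?_
    refine Filter.Eventually.of_forall fun x => ?_
    rw [Real.norm_eq_abs, abs_of_nonneg (S.bd r _).1]; exact (S.bd r _).2
  have e : ∫ x, ψ (x - c * (t - s)) * v t x = ∫ y, ψ y * v t (y + c * (t - s)) := by
    rw [← integral_sub_right_eq_self (fun y => ψ y * v t (y + c * (t - s))) (c * (t - s))]
    simp
  rw [e] at h
  simp only [mul_sub (ψ _)]
  rw [integral_sub (vi t _) (by simpa using vi s 0)]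
  exact h

theorem FE.SD.fbd {v : ℝ → ℝ → ℝ} {m : ℝ → Measure ℝ} {l : ℝ → ℝ → ℝ} (S : FE.SD v m l) (s t x y : ℝ) :
    |v t x - v s y| ≤ 1 := by
  have h1 := S.bd t x
  have h2 := S.bd s y
  rw [abs_le]; constructor <;> linarith

theorem FE.SD.fm {v : ℝ → ℝ → ℝ} {m : ℝ → Measure ℝ} {l : ℝ → ℝ → ℝ} (S : FE.SD v m l) (s t a : ℝ) :
    Measurable (fun y => v t (y + a) - v s y) := by
  have hvm : ∀ r, Measurable (v r) := fun r => S.vm.comp (measurable_const.prodMk measurable_id)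
  exact ((hvm t).comp (measurable_id.add_const a)).sub (hvm s)

theorem FE.SD.fc {v : ℝ → ℝ → ℝ} {m : ℝ → Measure ℝ} {l : ℝ → ℝ → ℝ} (S : FE.SD v m l) (s t a x : ℝ) :
    ContinuousWithinAt (fun y => v t (y + a) - v s y) (Ici x) x := by
  refine ContinuousWithinAt.sub ?_ ((S.cdf s).2.1 x)
  refine ContinuousWithinAt.comp (t := Ici (x + a)) ((S.cdf t).2.1 (x + a)) (by fun_prop) ?_
  intro y hy
  simpa using hy

theorem FE.SD.speed {v : ℝ → ℝ → ℝ} {m : ℝ → Measure ℝ} {l : ℝ → ℝ → ℝ} (S : FE.SD v m l)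
    (β : ℝ) (hβ : ∀ t x, |l t x| ≤ β) (s t : ℝ) (hs : 0 ≤ s) (hst : s ≤ t) (x : ℝ) :
    v s x ≤ v t (x + β * (t - s)) ∧ v t (x - β * (t - s)) ≤ v s x := by
  rcases hst.eq_or_lt with rfl | hst
  · simp
  constructor
  · have := FE.sign (fun y => -(v t (y + β * (t - s)) - v s y)) (fun y => (S.fc s t _ y).neg) (S.fm s t _).neg
      (fun y => by rw [abs_neg]; exact S.fbd s t _ _) ?_ x
    · linarith
    intro ψ h1 h2 h3
    have := S.T' (fun y => - ψ y) h1.neg h2.neg β s t 0 hs hst ?_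
    · simpa only [neg_mul, mul_neg, zero_mul] using this
    intro r _
    refine integral_nonpos fun y => ?_
    exact mul_nonpos_of_nonpos_of_nonneg (neg_nonpos.2 (h3 _)) (by linarith [(abs_le.1 (hβ r y)).2])
  · have := FE.sign (fun y => (v t (y + (-β) * (t - s)) - v s y)) (fun y => (S.fc s t _ y)) (S.fm s t _)
      (fun y => S.fbd s t _ _) ?_ x
    · rw [neg_mul, ← sub_eq_add_neg] at this; linarith
    intro ψ h1 h2 h3
    have := S.T' ψ h1 h2 (-β) s t 0 hs hst ?_
    · simpa using this
    intro r _
    refine integral_nonpos fun y => ?_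
    exact mul_nonpos_of_nonneg_of_nonpos (h3 _) (by linarith [(abs_le.1 (hβ r y)).1])

theorem FE.SD.L1 {v : ℝ → ℝ → ℝ} {m : ℝ → Measure ℝ} {l : ℝ → ℝ → ℝ} (S : FE.SD v m l)
    (c A B s t N Δ : ℝ) (hN : 0 ≤ N) (hAB : A < B) (hs : 0 ≤ s) (hst : s < t)
    (h1 : ∀ r ∈ Icc s t, ∀ x ∈ Ioo (A + c * (r - s)) (B + c * (r - s)), |c - l r x| ≤ N)
    (h2 : ∀ r ∈ Icc s t, (m r).real (Ioo (A + c * (r - s)) (B + c * (r - s))) ≤ Δ) :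
    ∫ y in A..B, |v t (y + c * (t - s)) - v s y| ≤ N * Δ * (t - s) := by
  have := S.pm
  refine FE.duality _ (S.fm s t _) (fun _ => S.fbd _ _ _ _) A B _ hAB ?_
  intro ψ hψ hc hψ1 hψ0
  refine S.T' ψ hψ hc c s t _ hs hst fun r hr => ?_
  calc ∫ x, ψ (x - c * (r - s)) * (c - l r x) ∂(m r)
      ≤ ∫ x, (Ioo (A + c * (r - s)) (B + c * (r - s))).indicator (fun _ => N) x ∂(m r) := by
        obtain ⟨K, hK⟩ := S.lb
        have hlr : Measurable (l r) := S.lm.comp (measurable_const.prodMk measurable_id)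
        refine integral_mono ?_ ?_ ?_
        · refine Integrable.of_bound (C := 1 * (|c| + K)) ?_ (Filter.Eventually.of_forall fun x => ?_)
          · exact ((hψ.continuous.measurable.comp (measurable_id.sub_const _)).mul
              (hlr.const_sub c)).aestronglyMeasurable
          · rw [norm_mul]
            refine mul_le_mul (hψ1 _) ?_ (norm_nonneg _) zero_le_one
            exact (norm_sub_le _ _).trans (add_le_add le_rfl (hK r x))
        · exact (integrable_const N).indicator measurableSet_Ioo
        · intro x
          by_cases hx : x ∈ Ioo (A + c * (r - s)) (B + c * (r - s))
          · simp only [indicator_of_mem hx]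
            refine (le_abs_self _).trans ?_
            rw [abs_mul]
            calc _ ≤ 1 * N := mul_le_mul (hψ1 _) (h1 r hr x hx) (abs_nonneg _) zero_le_one
              _ = N := one_mul N
          · simp only [indicator_of_notMem hx]
            rw [hψ0, zero_mul]
            intro h
            exact hx ⟨by linarith [h.1], by linarith [h.2]⟩
    _ = N * (m r).real (Ioo (A + c * (r - s)) (B + c * (r - s))) := by
        rw [integral_indicator measurableSet_Ioo]; simp [mul_comm]
    _ ≤ N * Δ := mul_le_mul_of_nonneg_left (h2 r hr) hN

theorem FE.SD.Ioo {v : ℝ → ℝ → ℝ} {m : ℝ → Measure ℝ} {l : ℝ → ℝ → ℝ} (S : FE.SD v m l)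
    (r p q : ℝ) (hpq : p < q) : (m r).real (Set.Ioo p q) = Function.leftLim (v r) q - v r p := by
  have := S.pm
  have hv : (ProbabilityTheory.cdf (m r) : ℝ → ℝ) = v r := by
    funext x; rw [ProbabilityTheory.cdf_eq_real, ← S.hm]; rfl
  rw [measureReal_def]
  conv_lhs => rw [← ProbabilityTheory.measure_cdf (m r)]
  rw [StieltjesFunction.measure_Ioo, hv, ENNReal.toReal_ofReal]
  exact sub_nonneg.2 ((S.cdf r).1.le_leftLim hpq)

/-- the flat estimate for one component -/
theorem FE.SD.main {v : ℝ → ℝ → ℝ} {m : ℝ → Measure ℝ} {l : ℝ → ℝ → ℝ} (S : FE.SD v m l)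
    (β : ℝ) (hβ : ∀ t x, |l t x| ≤ β) (c a b τ h N : ℝ) (hc : |c| ≤ β) (hN : 0 ≤ N) (hτ : 0 ≤ τ) (hh : 0 < h)
    (hab : a + β * h < b - β * h)
    (h1 : ∀ r ∈ Icc τ (τ + h), ∀ x ∈ Set.Ioo (a + β * (r - τ)) (b - β * (r - τ)), |c - l r x| ≤ N) :
    ∫ x in (a + β * h)..(b - β * h), |v (τ + h) x - v τ (x - c * h)| ≤
      N * (Function.leftLim (v τ) b - v τ a) * h := by
  have hcc := abs_le.1 hc
  have hsub : ∀ r ∈ Icc τ (τ + h), Set.Ioo (a + β * h - c * h + c * (r - τ)) (b - β * h - c * h + c * (r - τ)) ⊆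
      Set.Ioo (a + β * (r - τ)) (b - β * (r - τ)) := by
    intro r hr
    apply Set.Ioo_subset_Ioo
    · nlinarith [mul_nonneg (sub_nonneg.2 hcc.2) (sub_nonneg.2 hr.2)]
    · nlinarith [mul_nonneg (sub_nonneg.2 hcc.1) (sub_nonneg.2 hr.2)]
  have key := S.L1 c (a + β * h - c * h) (b - β * h - c * h) τ (τ + h) N
    (Function.leftLim (v τ) b - v τ a) hN (by linarith) hτ (by linarith)
    (fun r hr x hx => h1 r hr x (hsub r hr hx)) ?_
  · rw [add_sub_cancel_left] at key
    rw [← intervalIntegral.integral_comp_sub_right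
      (fun y => |v (τ + h) (y + c * h) - v τ y|)] at key
    simpa using key
  intro r hr
  have hpm := S.pm r
  refine (measureReal_mono (hsub r hr)).trans ?_
  have hβ0 : 0 ≤ β := (abs_nonneg _).trans hc
  have hlt : a + β * (r - τ) < b - β * (r - τ) := by
    nlinarith [mul_nonneg hβ0 (sub_nonneg.2 hr.2)]
  rw [S.Ioo r _ _ hlt]
  have s1 := (S.speed β hβ τ r hτ hr.1 a).1
  have s2 : Function.leftLim (v r) (b - β * (r - τ)) ≤ Function.leftLim (v τ) b := by
    have hmono := (S.cdf r).1
    have ht := hmono.tendsto_leftLim (b - β * (r - τ))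
    refine le_of_tendsto ht ?_
    filter_upwards [self_mem_nhdsWithin] with y hy
    have hy' : y < b - β * (r - τ) := hy
    have s3 := (S.speed β hβ τ r hτ hr.1 (y + β * (r - τ))).2
    rw [add_sub_cancel_right] at s3
    exact s3.trans ((S.cdf τ).1.le_leftLim (by linarith))
  linarith

theorem FE.coord {d : ℕ} (u : Fin d → ℝ → ℝ → ℝ) (γ : Fin d) (t x θ : ℝ) (p q : Fin d → ℝ)
    (h1 : ∀ i, u i t x ∈ Icc (p i) (q i)) (h2 : Function.leftLim (u γ t) x ∈ Icc (p γ) (q γ))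
    (hθ : θ ∈ Icc (0:ℝ) 1) (i : Fin d) :
    Function.update (fun γ' => u γ' t x) γ
      ((1 - θ) * Function.leftLim (u γ t) x + θ * u γ t x) i ∈ Icc (p i) (q i) := by
  rcases eq_or_ne i γ with rfl | hi
  · rw [Function.update_self]
    have h3 := h1 i
    constructor
    · nlinarith [mul_le_mul_of_nonneg_left h2.1 (sub_nonneg.2 hθ.2), mul_le_mul_of_nonneg_left h3.1 hθ.1]
    · nlinarith [mul_le_mul_of_nonneg_left h2.2 (sub_nonneg.2 hθ.2), mul_le_mul_of_nonneg_left h3.2 hθ.1]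
  · rw [Function.update_of_ne hi]; exact h1 i

theorem FE.cdf01 {F : ℝ → ℝ} (hF : IsCDF F) (x : ℝ) : F x ∈ Icc (0:ℝ) 1 :=
  ⟨hF.1.le_of_tendsto hF.2.2.1 x, hF.1.ge_of_tendsto hF.2.2.2 x⟩

theorem FE.ll01 {F : ℝ → ℝ} (hF : IsCDF F) (x : ℝ) : Function.leftLim F x ∈ Icc (0:ℝ) 1 :=
  ⟨(FE.cdf01 hF (x - 1)).1.trans (hF.1.le_leftLim (by linarith)), (hF.1.leftLim_le le_rfl).trans (FE.cdf01 hF x).2⟩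

theorem FE.cube {d : ℕ} (u : Fin d → ℝ → ℝ → ℝ) (γ : Fin d) (t x θ : ℝ) (hu : ∀ i, IsCDF (u i t))
    (hθ : θ ∈ Icc (0:ℝ) 1) :
    Function.update (fun γ' => u γ' t x) γ
      ((1 - θ) * Function.leftLim (u γ t) x + θ * u γ t x) ∈ Icc (0 : Fin d → ℝ) 1 := by
  have := FE.coord u γ t x θ 0 1 (fun i => FE.cdf01 (hu i) x) (FE.ll01 (hu γ) x) hθ
  exact ⟨fun i => (this i).1, fun i => (this i).2⟩

theorem FE.mkSD {d : ℕ} (lam : Fin d → (Fin d → ℝ) → ℝ) (hlam : ∀ γ, Continuous (lam γ)) (β : ℝ)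
    (hβ : ∀ γ : Fin d, ∀ w ∈ Icc (0 : Fin d → ℝ) 1, |lam γ w| ≤ β)
    (u : Fin d → ℝ → ℝ → ℝ) (u0 : Fin d → ℝ → ℝ)
    (hsol : IsProbSol lam u u0) (hL1 : ContL1loc u) (γ : Fin d) :
    ∃ m, FE.SD (fun t => u γ (max t 0)) m (fun t x => lamBrace lam u γ (max t 0) x) ∧
      ∀ t x, |lamBrace lam u γ (max t 0) x| ≤ β := by
  obtain ⟨hum, hcdf, -, μ, hμp, hμ, hw⟩ := hsol
  have vm : ∀ i, Measurable (fun p : ℝ × ℝ => u i (max p.1 0) p.2) := by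
    intro i
    have : Measurable (fun p : ℝ × ℝ => ((⟨max p.1 0, mem_Ici.2 (le_max_right _ _)⟩ : Ici (0:ℝ)), p.2)) := by
      refine Measurable.prodMk ?_ measurable_snd
      exact Measurable.subtype_mk (by fun_prop)
    exact (hum i).comp this
  have hc : ∀ i t, IsCDF (u i (max t 0)) := fun i t => hcdf i _ (le_max_right _ _)
  have hb : ∀ t x, |lamBrace lam u γ (max t 0) x| ≤ β := by
    intro t x
    have := intervalIntegral.norm_integral_le_of_norm_le_const (a := 0) (b := 1) (C := β)
      (f := fun θ : ℝ => lam γ (Function.update (fun γ' => u γ' (max t 0) x) γ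
      ((1 - θ) * Function.leftLim (u γ (max t 0)) x + θ * u γ (max t 0) x))) (by
        intro θ hθ
        rw [uIoc_of_le zero_le_one] at hθ
        exact hβ γ _ (FE.cube u γ _ x θ (fun i => hc i t) ⟨hθ.1.le, hθ.2⟩))
    simpa [lamBrace] using this
  have llm : Measurable (fun p : ℝ × ℝ => Function.leftLim (u γ (max p.1 0)) p.2) := by
    refine measurable_of_tendsto_metrizable (f := fun (n : ℕ) (p : ℝ × ℝ) => u γ (max p.1 0) (p.2 - 1 / ((n:ℝ) + 1))) ?_ ?_
    · intro n
      exact (vm γ).comp (measurable_fst.prodMk (measurable_snd.sub_const _))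
    · rw [tendsto_pi_nhds]
      intro p
      refine ((hc γ p.1).1.tendsto_leftLim p.2).comp ?_
      rw [tendsto_nhdsWithin_iff]
      constructor
      · simpa using (tendsto_one_div_add_atTop_nhds_zero_nat (𝕜 := ℝ)).const_sub p.2
      · refine Filter.Eventually.of_forall fun n => ?_
        have : (0:ℝ) < 1 / ((n:ℝ) + 1) := by positivity
        simp only [mem_Iio]; linarith
  refine ⟨fun t => μ γ (max t 0), ⟨vm γ, hc γ, fun t => hμp γ _, fun t x => hμ γ _ (le_max_right _ _) x, ?_,
    ⟨β, hb⟩, ?_, ?_⟩, hb⟩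
  · have hF : Measurable (fun q : (ℝ × ℝ) × ℝ => lam γ (Function.update (fun γ' => u γ' (max q.1.1 0) q.1.2) γ
      ((1 - q.2) * Function.leftLim (u γ (max q.1.1 0)) q.1.2 + q.2 * u γ (max q.1.1 0) q.1.2))) := by
      refine (hlam γ).measurable.comp (measurable_pi_iff.2 fun i => ?_)
      rcases eq_or_ne i γ with rfl | hi
      · simp only [Function.update_self]
        exact ((measurable_const.sub measurable_snd).mul (llm.comp measurable_fst)).add
          (measurable_snd.mul ((vm i).comp measurable_fst))
      · simp only [Function.update_of_ne hi]
        exact (vm i).comp measurable_fst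
    have := MeasureTheory.StronglyMeasurable.integral_prod_right' (ν := volume.restrict (Ioc (0:ℝ) 1)) hF.stronglyMeasurable
    simp only [lamBrace, intervalIntegral.integral_of_le zero_le_one]
    exact this.measurable
  · intro a b t₀
    have h := hL1 γ a b (max t₀ 0) (le_max_right _ _)
    refine h.comp (tendsto_nhdsWithin_iff.2 ⟨?_, Filter.Eventually.of_forall fun t => mem_Ici.2 (le_max_right _ _)⟩)
    have : Continuous (fun t : ℝ => max t 0) := by fun_prop
    exact this.tendsto t₀
  · intro φ φt hφ hφ0
    have h := hw (fun i => if i = γ then φ else fun _ _ => 0) (fun i => if i = γ then φt else fun _ _ => 0) ?_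
    · rw [Finset.sum_eq_single γ (by intro i _ hi; simp [hi]) (by simp),
        Finset.sum_eq_single γ (by intro i _ hi; simp [hi]) (by simp)] at h
      simp only [if_true, hφ0, zero_mul, integral_zero, add_zero] at h
      rw [setIntegral_congr_fun (g := fun t => ∫ x, φt t x * u γ t x) measurableSet_Ici, h]
      · refine setIntegral_congr_fun measurableSet_Ici fun t ht => ?_
        simp only [max_eq_left (mem_Ici.1 ht)]
      · intro t ht
        simp only [max_eq_left (mem_Ici.1 ht)]
    · intro i
      by_cases hi : i = γ
      · simpa [hi] using hφ
      · simp only [hi, if_false]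
        refine ⟨continuous_const, HasCompactSupport.zero, continuous_const, fun t x => hasDerivAt_const _ _⟩

theorem FE.core {d : ℕ} (lam : Fin d → (Fin d → ℝ) → ℝ) (hlam : ∀ γ, Continuous (lam γ)) (β : ℝ)
    (hβ : ∀ γ : Fin d, ∀ w ∈ Icc (0 : Fin d → ℝ) 1, |lam γ w| ≤ β) (hβ0 : 0 ≤ β)
    (L : ℝ) (hL : 0 ≤ L)
    (hLC : ∀ γ : Fin d, ∀ w w' : Fin d → ℝ, w ∈ Icc (0 : Fin d → ℝ) 1 →
      w' ∈ Icc (0 : Fin d → ℝ) 1 →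
      |lam γ w - lam γ w'| ≤ L * ∑ γ' : Fin d, |w γ' - w' γ'|)
    (u : Fin d → ℝ → ℝ → ℝ) (u0 : Fin d → ℝ → ℝ)
    (hsol : IsProbSol lam u u0) (hL1 : ContL1loc u) (τ ξ a b h : ℝ) (hτ : 0 ≤ τ) (ha : a < ξ) (hb : ξ < b)
    (hh : 0 < h) (hab : a + β * h < b - β * h) :
    ∫ x in (a + β * h)..(b - β * h), ∑ γ : Fin d, |u γ (τ + h) x - u γ τ (x - lamBrace lam u γ τ ξ * h)|
      ≤ L * (∑ γ : Fin d, (Function.leftLim (u γ τ) b - u γ τ a)) ^ 2 * h := by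
  have hSD := FE.mkSD lam hlam β hβ u u0 hsol hL1
  choose m hS hlb using hSD
  have hcdf := hsol.2.1
  set D := ∑ γ : Fin d, (Function.leftLim (u γ τ) b - u γ τ a) with hD
  have hΔ : ∀ γ, 0 ≤ Function.leftLim (u γ τ) b - u γ τ a := fun γ =>
    sub_nonneg.2 ((hcdf γ τ hτ).1.le_leftLim (by linarith))
  have hD0 : 0 ≤ D := Finset.sum_nonneg fun γ _ => hΔ γ
  have hτm : max τ 0 = τ := max_eq_left hτ
  have hτhm : max (τ + h) 0 = τ + h := max_eq_left (by linarith)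
  -- range of values
  have hrange : ∀ i, ∀ r ∈ Icc τ (τ + h), ∀ x ∈ Ioo (a + β * (r - τ)) (b - β * (r - τ)),
      u i r x ∈ Icc (u i τ a) (Function.leftLim (u i τ) b) ∧
      Function.leftLim (u i r) x ∈ Icc (u i τ a) (Function.leftLim (u i τ) b) := by
    intro i r hr x hx
    have hr0 : 0 ≤ r := hτ.trans hr.1
    have s1 := ((hS i).speed β (hlb i) τ r hτ hr.1 a).1
    have s2 := ((hS i).speed β (hlb i) τ r hτ hr.1 (x + β * (r - τ))).2
    simp only [hτm, max_eq_left hr0, add_sub_cancel_right] at s1 s2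
    have hm := (hcdf i r hr0).1
    have e1 : u i τ a ≤ Function.leftLim (u i r) x := s1.trans (hm.le_leftLim hx.1)
    have e2 : u i r x ≤ Function.leftLim (u i τ) b :=
      s2.trans ((hcdf i τ hτ).1.le_leftLim (by linarith [hx.2]))
    have e3 : Function.leftLim (u i r) x ≤ u i r x := hm.leftLim_le le_rfl
    exact ⟨⟨e1.trans e3, e2⟩, ⟨e1, e3.trans e2⟩⟩
  have hint : ∀ γ r x, IntervalIntegrable (fun θ : ℝ => lam γ (Function.update (fun γ' => u γ' r x) γ
      ((1 - θ) * Function.leftLim (u γ r) x + θ * u γ r x))) volume 0 1 := by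
    intro γ r x
    apply Continuous.intervalIntegrable
    refine (hlam γ).comp ?_
    exact continuous_const.update γ (by fun_prop)
  have hdiff : ∀ γ, ∀ r ∈ Icc τ (τ + h), ∀ x ∈ Ioo (a + β * (r - τ)) (b - β * (r - τ)),
      |lamBrace lam u γ τ ξ - lamBrace lam u γ r x| ≤ L * D := by
    intro γ r hr x hx
    have hr0 : 0 ≤ r := hτ.trans hr.1
    rw [lamBrace, lamBrace, ← intervalIntegral.integral_sub (hint _ _ _) (hint _ _ _)]
    have := intervalIntegral.norm_integral_le_of_norm_le_const (a := 0) (b := 1) (C := L * D)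
      (f := fun θ : ℝ => lam γ (Function.update (fun γ' => u γ' τ ξ) γ
      ((1 - θ) * Function.leftLim (u γ τ) ξ + θ * u γ τ ξ)) - lam γ (Function.update (fun γ' => u γ' r x) γ
      ((1 - θ) * Function.leftLim (u γ r) x + θ * u γ r x))) (by
        intro θ hθ
        rw [uIoc_of_le zero_le_one] at hθ
        have hθ' : θ ∈ Icc (0:ℝ) 1 := ⟨hθ.1.le, hθ.2⟩
        refine (hLC γ _ _ (FE.cube u γ τ ξ θ (fun i => hcdf i τ hτ) hθ')
          (FE.cube u γ r x θ (fun i => hcdf i r hr0) hθ')).trans ?_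
        refine mul_le_mul_of_nonneg_left (Finset.sum_le_sum fun i _ => ?_) hL
        have hξ : ξ ∈ Ioo (a + β * (τ - τ)) (b - β * (τ - τ)) := by simp [ha, hb]
        have hτI : τ ∈ Icc τ (τ + h) := ⟨le_rfl, by linarith⟩
        have c1 := FE.coord u γ τ ξ θ (fun i => u i τ a) (fun i => Function.leftLim (u i τ) b)
          (fun i => (hrange i τ hτI ξ hξ).1) (hrange γ τ hτI ξ hξ).2 hθ' i
        have c2 := FE.coord u γ r x θ (fun i => u i τ a) (fun i => Function.leftLim (u i τ) b)
          (fun i => (hrange i r hr x hx).1) (hrange γ r hr x hx).2 hθ' i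
        exact abs_sub_le_of_le_of_le c1.1 c1.2 c2.1 c2.2)
    simpa using this
  have hone : ∀ γ, ∫ x in (a + β * h)..(b - β * h), |u γ (τ + h) x - u γ τ (x - lamBrace lam u γ τ ξ * h)|
      ≤ L * D * (Function.leftLim (u γ τ) b - u γ τ a) * h := by
    intro γ
    have := (hS γ).main β (hlb γ) (lamBrace lam u γ τ ξ) a b τ h (L * D)
      (by have := hlb γ τ ξ; rwa [hτm] at this) (mul_nonneg hL hD0) hτ hh hab (by
        intro r hr x hx
        rw [max_eq_left (hτ.trans hr.1)]
        exact hdiff γ r hr x hx)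
    simpa only [hτm, hτhm] using this
  rw [intervalIntegral.integral_finsetSum]
  · refine (Finset.sum_le_sum fun γ _ => hone γ).trans (le_of_eq ?_)
    rw [← Finset.sum_mul, ← Finset.mul_sum]; ring
  · intro γ _
    have m1 : Measurable (u γ (τ + h)) := (hcdf γ _ (by linarith)).1.measurable
    have m2 : Measurable (u γ τ) := (hcdf γ _ hτ).1.measurable
    refine (intervalIntegrable_const (c := (1:ℝ))).mono_fun
      ((m1.sub (m2.comp (measurable_id.sub_const _))).abs.aestronglyMeasurable) ?_
    refine Filter.Eventually.of_forall fun x => ?_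
    have := (hS γ).fbd τ (τ + h) x (x - lamBrace lam u γ τ ξ * h)
    simp only [hτm, hτhm] at this
    simpa using this

theorem FE.core2 {d : ℕ} (lam : Fin d → (Fin d → ℝ) → ℝ) (β : ℝ)
    (hβ : ∀ γ : Fin d, ∀ w ∈ Icc (0 : Fin d → ℝ) 1, |lam γ w| ≤ β) (hβ0 : 0 ≤ β)
    (L : ℝ) (hL : 0 ≤ L)
    (hLC : ∀ γ : Fin d, ∀ w w' : Fin d → ℝ, w ∈ Icc (0 : Fin d → ℝ) 1 →
      w' ∈ Icc (0 : Fin d → ℝ) 1 →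
      |lam γ w - lam γ w'| ≤ L * ∑ γ' : Fin d, |w γ' - w' γ'|)
    (u : Fin d → ℝ → ℝ → ℝ) (u0 : Fin d → ℝ → ℝ)
    (hsol : IsProbSol lam u u0) (hL1 : ContL1loc u) (τ ξ a b h : ℝ) (hτ : 0 ≤ τ) (ha : a < ξ) (hb : ξ < b)
    (hh : 0 < h) (hab : a + β * h < b - β * h) :
    ∫ x in (a + β * h)..(b - β * h), ∑ γ : Fin d, |u γ (τ + h) x - u γ τ (x - lamBrace lam u γ τ ξ * h)|
      ≤ L * (∑ γ : Fin d, (Function.leftLim (u γ τ) b - u γ τ a)) ^ 2 * h := by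
  set cl : (Fin d → ℝ) → (Fin d → ℝ) := fun w i => max 0 (min 1 (w i)) with hcl
  have hclc : Continuous cl := by
    refine continuous_pi fun i => ?_
    simp only [hcl]; fun_prop
  have hclm : ∀ w, cl w ∈ Icc (0 : Fin d → ℝ) 1 := fun w =>
    ⟨fun i => le_max_left _ _, fun i => max_le zero_le_one (min_le_left _ _)⟩
  have hcli : ∀ w ∈ Icc (0 : Fin d → ℝ) 1, cl w = w := by
    intro w hw
    funext i
    simp only [hcl]
    have e1 : 0 ≤ w i := hw.1 i
    have e2 : w i ≤ 1 := hw.2 i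
    rw [min_eq_right e2, max_eq_right e1]
  set lam' : Fin d → (Fin d → ℝ) → ℝ := fun γ w => lam γ (cl w) with hlam'
  have hlamc : ∀ γ, ContinuousOn (lam γ) (Icc 0 1) := by
    intro γ w hw
    rw [ContinuousWithinAt, tendsto_iff_dist_tendsto_zero]
    have t : Tendsto (fun w' : Fin d → ℝ => L * ∑ i, |w' i - w i|) (nhdsWithin w (Icc 0 1)) (nhds 0) := by
      have hcont : Continuous (fun w' : Fin d → ℝ => L * ∑ i, |w' i - w i|) := by fun_prop
      have := hcont.tendsto w
      simp only [sub_self, abs_zero, Finset.sum_const_zero, mul_zero] at this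
      exact this.mono_left nhdsWithin_le_nhds
    refine squeeze_zero' (Filter.Eventually.of_forall fun _ => dist_nonneg) ?_ t
    filter_upwards [self_mem_nhdsWithin] with w' hw'
    exact hLC γ w' w hw' hw
  have hlc : ∀ γ, Continuous (lam' γ) := fun γ => (hlamc γ).comp_continuous hclc hclm
  have hbr : ∀ γ t x, 0 ≤ t → lamBrace lam' u γ t x = lamBrace lam u γ t x := by
    intro γ t x ht
    refine intervalIntegral.integral_congr fun θ hθ => ?_
    rw [uIcc_of_le zero_le_one] at hθ
    simp only [hlam']
    rw [hcli _ (FE.cube u γ t x θ (fun i => hsol.2.1 i t ht) hθ)]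
  have hsol' : IsProbSol lam' u u0 := by
    obtain ⟨h1, h2, h3, μ, h4, h5, h6⟩ := hsol
    refine ⟨h1, h2, h3, μ, h4, h5, fun φ φt hφ => (h6 φ φt hφ).trans ?_⟩
    refine Finset.sum_congr rfl fun γ _ => setIntegral_congr_fun measurableSet_Ici fun t ht => ?_
    simp only [hbr γ t _ ht]
  have := FE.core lam' hlc β (fun γ w hw => hβ γ _ (hclm w)) hβ0 L hL (by
    intro γ w w' hw hw'
    simp only [hlam']
    rw [hcli w hw, hcli w' hw']
    exact hLC γ w w' hw hw') u u0 hsol' hL1 τ ξ a b h hτ ha hb hh hab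
  simpa only [hbr _ τ ξ hτ] using this

theorem FE.core3 {d : ℕ} (lam : Fin d → (Fin d → ℝ) → ℝ) (β : ℝ)
    (hβ : ∀ γ : Fin d, ∀ w ∈ Icc (0 : Fin d → ℝ) 1, |lam γ w| ≤ β) (hβ0 : 0 ≤ β)
    (L : ℝ) (hL : 0 ≤ L)
    (hLC : ∀ γ : Fin d, ∀ w w' : Fin d → ℝ, w ∈ Icc (0 : Fin d → ℝ) 1 →
      w' ∈ Icc (0 : Fin d → ℝ) 1 →
      |lam γ w - lam γ w'| ≤ L * ∑ γ' : Fin d, |w γ' - w' γ'|)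
    (u : Fin d → ℝ → ℝ → ℝ) (u0 : Fin d → ℝ → ℝ)
    (hsol : IsProbSol lam u u0) (hL1 : ContL1loc u) (τ ξ a b : ℝ) (hτ : 0 ≤ τ) (ha : a < ξ) (hb : ξ < b) :
    Filter.limsup
          (fun h : ℝ =>
            (((1 / h) * ∫ x in (a + β * h)..(b - β * h),
                ∑ γ : Fin d,
                  |u γ (τ + h) x - u γ τ (x - lamBrace lam u γ τ ξ * h)| : ℝ) : EReal))
          (nhdsWithin (0:ℝ) (Ioi 0))
        ≤ ((L * (∑ γ : Fin d, (Function.leftLim (u γ τ) b - u γ τ a)) ^ 2 : ℝ) : EReal) := by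
  refine Filter.limsup_le_of_le (by isBoundedDefault) ?_
  have h1 : ∀ᶠ h in nhdsWithin (0:ℝ) (Ioi 0), a + β * h < b - β * h := by
    have hc : Continuous (fun h : ℝ => (b - β * h) - (a + β * h)) := by fun_prop
    have := hc.tendsto 0
    have h2 := (this.mono_left (nhdsWithin_le_nhds (s := Ioi 0))).eventually (lt_mem_nhds (a := 0) (by simp; linarith))
    filter_upwards [h2] with h hh
    linarith
  filter_upwards [h1, self_mem_nhdsWithin] with h hab hh
  have hh' : 0 < h := hh
  have := FE.core2 lam β hβ hβ0 L hL hLC u u0 hsol hL1 τ ξ a b h hτ ha hb hh' hab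
  rw [EReal.coe_le_coe_iff, one_div, inv_mul_le_iff₀ hh']
  linarith

/-- **Flat estimate** (Bianchini–Bressan condition): for a Lipschitz field `λ` and a
probabilistic solution `u` continuous in `L¹_loc`, comparing `u(τ+h,·)` with the
linear transport of `u(τ,·)` at the frozen speed `λ^γ{u}(τ,ξ)`,
`limsup_{h↓0} (1/h) ∫_{a+βh}^{b−βh} Σ_γ |u^γ(τ+h,x) − u^γ(τ, x − λ^γ{u}(τ,ξ)h)| dx
  ≤ C (Σ_γ (u^γ(τ,b⁻) − u^γ(τ,a)))²`;
one can take `C = L` and any `β` larger than all the `|λ^γ|`. -/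
theorem flat_estimate {d : ℕ} (hd : 1 ≤ d)
    (lam : Fin d → (Fin d → ℝ) → ℝ)
    (L : ℝ) (hL : 0 ≤ L)
    (hLC : ∀ γ : Fin d, ∀ w w' : Fin d → ℝ, w ∈ Icc (0 : Fin d → ℝ) 1 →
      w' ∈ Icc (0 : Fin d → ℝ) 1 →
      |lam γ w - lam γ w'| ≤ L * ∑ γ' : Fin d, |w γ' - w' γ'|)
    (u : Fin d → ℝ → ℝ → ℝ) (u0 : Fin d → ℝ → ℝ)
    (hsol : IsProbSol lam u u0) (hL1 : ContL1loc u) :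
    (∃ C : ℝ, 0 < C ∧ ∃ β : ℝ, 0 < β ∧
      ∀ τ ξ a b : ℝ, 0 ≤ τ → a < ξ → ξ < b →
        Filter.limsup
          (fun h : ℝ =>
            (((1 / h) * ∫ x in (a + β * h)..(b - β * h),
                ∑ γ : Fin d,
                  |u γ (τ + h) x - u γ τ (x - lamBrace lam u γ τ ξ * h)| : ℝ) : EReal))
          (nhdsWithin (0:ℝ) (Ioi 0))
        ≤ ((C * (∑ γ : Fin d, (Function.leftLim (u γ τ) b - u γ τ a)) ^ 2 : ℝ) : EReal)) ∧
    (∀ β : ℝ, (∀ γ : Fin d, ∀ w ∈ Icc (0 : Fin d → ℝ) 1, |lam γ w| < β) →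
      ∀ τ ξ a b : ℝ, 0 ≤ τ → a < ξ → ξ < b →
        Filter.limsup
          (fun h : ℝ =>
            (((1 / h) * ∫ x in (a + β * h)..(b - β * h),
                ∑ γ : Fin d,
                  |u γ (τ + h) x - u γ τ (x - lamBrace lam u γ τ ξ * h)| : ℝ) : EReal))
          (nhdsWithin (0:ℝ) (Ioi 0))
        ≤ ((L * (∑ γ : Fin d, (Function.leftLim (u γ τ) b - u γ τ a)) ^ 2 : ℝ) : EReal)) := by
  have hpt : ∀ β : ℝ, (∀ γ : Fin d, ∀ w ∈ Icc (0 : Fin d → ℝ) 1, |lam γ w| ≤ β) → 0 ≤ β := fun β hβ =>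
    (abs_nonneg _).trans (hβ ⟨0, hd⟩ 0 ⟨le_rfl, zero_le_one⟩)
  constructor
  · set β : ℝ := 1 + ∑ γ, |lam γ 0| + L * d with hβd
    have h0 : (0 : Fin d → ℝ) ∈ Icc (0 : Fin d → ℝ) 1 := ⟨le_rfl, zero_le_one⟩
    have hs : 0 ≤ ∑ γ, |lam γ 0| := Finset.sum_nonneg fun _ _ => abs_nonneg _
    have hβ : ∀ γ : Fin d, ∀ w ∈ Icc (0 : Fin d → ℝ) 1, |lam γ w| ≤ β := by
      intro γ w hw
      have h1 := hLC γ w 0 hw h0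
      have h2 : ∑ i, |w i - (0 : Fin d → ℝ) i| ≤ d := by
        calc _ ≤ ∑ _i : Fin d, (1:ℝ) := Finset.sum_le_sum fun i _ => by
              have e1 := hw.1 i
              have e2 := hw.2 i
              simp only [Pi.zero_apply, Pi.one_apply, sub_zero] at *
              rw [abs_of_nonneg e1]; exact e2
          _ = d := by simp
      have h3 := mul_le_mul_of_nonneg_left h2 hL
      have h4 : |lam γ 0| ≤ ∑ γ, |lam γ 0| :=
        Finset.single_le_sum (f := fun γ => |lam γ 0|) (fun _ _ => abs_nonneg _) (Finset.mem_univ γ)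
      have h5 := abs_sub_abs_le_abs_sub (lam γ w) (lam γ 0)
      linarith
    refine ⟨L + 1, by linarith, β, by positivity, fun τ ξ a b hτ ha hb => ?_⟩
    refine (FE.core3 lam β hβ (hpt β hβ) L hL hLC u u0 hsol hL1 τ ξ a b hτ ha hb).trans ?_
    rw [EReal.coe_le_coe_iff]
    exact mul_le_mul_of_nonneg_right (by linarith) (sq_nonneg _)
  · intro β hβ τ ξ a b hτ ha hb
    have hβ' : ∀ γ : Fin d, ∀ w ∈ Icc (0 : Fin d → ℝ) 1, |lam γ w| ≤ β := fun γ w hw => (hβ γ w hw).le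
    exact FE.core3 lam β hβ' (hpt β hβ') L hL hLC u u0 hsol hL1 τ ξ a b hτ ha hb
end
end

section
/- Let p ∈ [1,∞). Let (m_n)_{n≥1} and (m′_n)_{n≥1} be sequences of Borel probability measures on ℝ converging weakly to m and m′ respectively, and let F_n, G_n, F, G denote the CDFs of m_n, m′_n, m, m′. Then ∫₀¹ |F⁻¹(v) − G⁻¹(v)|^p dv ≤ liminf_{n→∞} ∫₀¹ |F_n⁻¹(v) − G_n⁻¹(v)|^p dv, where both sides are taken in [0,+∞]. -/
open MeasureTheory Filter Set

noncomputable section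

/-- The CDF of a Borel measure on ℝ. -/
def mcdf (m : Measure ℝ) (x : ℝ) : ℝ := (m (Iic x)).toReal

lemma mcdf_eq_cdf (m : Measure ℝ) [IsProbabilityMeasure m] : mcdf m = ProbabilityTheory.cdf m := by
  funext x
  rw [ProbabilityTheory.cdf_eq_real]
  rfl

lemma cdfInv_bdd (m : Measure ℝ) [IsProbabilityMeasure m] {v : ℝ} (hv : v ∈ Ioo (0:ℝ) 1) :
    BddBelow {x : ℝ | v ≤ mcdf m x} := by
  rw [mcdf_eq_cdf]
  obtain ⟨a, ha⟩ := ((ProbabilityTheory.tendsto_cdf_atBot m).eventually_lt_const hv.1).exists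
  refine ⟨a, fun x hx => ?_⟩
  by_contra h
  push Not at h
  have := ProbabilityTheory.monotone_cdf m h.le
  simp only [mem_ofPred_eq] at hx
  linarith

lemma cdfInv_nonempty (m : Measure ℝ) [IsProbabilityMeasure m] {v : ℝ} (hv : v ∈ Ioo (0:ℝ) 1) :
    {x : ℝ | v ≤ mcdf m x}.Nonempty := by
  rw [mcdf_eq_cdf]
  obtain ⟨a, ha⟩ := ((ProbabilityTheory.tendsto_cdf_atTop m).eventually_const_lt hv.2).exists
  exact ⟨a, ha.le⟩

lemma cdfInv_le (m : Measure ℝ) [IsProbabilityMeasure m] {v x : ℝ} (hv : v ∈ Ioo (0:ℝ) 1)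
    (h : v ≤ mcdf m x) : cdfInv (mcdf m) v ≤ x := csInf_le (cdfInv_bdd m hv) h

lemma le_of_cdfInv_lt (m : Measure ℝ) [IsProbabilityMeasure m] {v x : ℝ} (hv : v ∈ Ioo (0:ℝ) 1)
    (h : cdfInv (mcdf m) v < x) : ∃ z < x, v ≤ mcdf m z := by
  obtain ⟨z, hz, hzx⟩ := exists_lt_of_csInf_lt (cdfInv_nonempty m hv) h
  exact ⟨z, hzx, hz⟩

lemma le_mcdf (m : Measure ℝ) [IsProbabilityMeasure m] {v x : ℝ} (hv : v ∈ Ioo (0:ℝ) 1)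
    (h : cdfInv (mcdf m) v ≤ x) : v ≤ mcdf m x := by
  have h1 : ∀ y, x < y → v ≤ mcdf m y := by
    intro y hy
    obtain ⟨z, hz, hvz⟩ := le_of_cdfInv_lt m hv (h.trans_lt hy)
    rw [mcdf_eq_cdf] at *
    exact hvz.trans (ProbabilityTheory.monotone_cdf m hz.le)
  rw [mcdf_eq_cdf] at *
  have h2 : ContinuousWithinAt (ProbabilityTheory.cdf m) (Ioi x) x :=
    ((ProbabilityTheory.cdf m).right_continuous x).mono Ioi_subset_Ici_self
  exact ge_of_tendsto h2 (eventually_mem_nhdsWithin.mono h1)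

lemma cdfInv_mono (m : Measure ℝ) [IsProbabilityMeasure m] :
    MonotoneOn (cdfInv (mcdf m)) (Ioo (0:ℝ) 1) := by
  intro v hv w hw hvw
  exact cdfInv_le m hv (hvw.trans (le_mcdf m hw le_rfl))

lemma cdfInv_tendsto (mn : ℕ → Measure ℝ) (m : Measure ℝ)
    (hmn : ∀ n, IsProbabilityMeasure (mn n)) (hm : IsProbabilityMeasure m)
    (hweak : ∀ f : ℝ → ℝ, Continuous f → (∃ M, ∀ x, |f x| ≤ M) →
      Tendsto (fun n => ∫ x, f x ∂(mn n)) atTop (nhds (∫ x, f x ∂m))) :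
    ∀ᵐ v ∂(volume.restrict (Ioo (0:ℝ) 1)),
      Tendsto (fun n => cdfInv (mcdf (mn n)) v) atTop (nhds (cdfInv (mcdf m) v)) := by
  let P : ℕ → ProbabilityMeasure ℝ := fun n => ⟨mn n, hmn n⟩
  let P0 : ProbabilityMeasure ℝ := ⟨m, hm⟩
  have hT : Tendsto P atTop (nhds P0) := by
    rw [ProbabilityMeasure.tendsto_iff_forall_integral_tendsto]
    intro f
    exact hweak f f.continuous ⟨‖f‖, fun x => f.norm_coe_le_norm x⟩
  have hc := (cdfInv_mono m).countable_not_continuousWithinAt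
  have hc0 := hc.ae_notMem volume
  filter_upwards [ae_restrict_of_ae hc0, ae_restrict_mem measurableSet_Ioo] with v hv1 hv
  have hcont : ContinuousWithinAt (cdfInv (mcdf m)) (Ioo 0 1) v := by
    by_contra h
    exact hv1 ⟨hv, h⟩
  rw [tendsto_order]
  constructor
  · intro y hy
    have h1 : mcdf m y < v := by
      by_contra h
      push Not at h
      exact absurd (cdfInv_le m hv h) (not_le.2 hy)
    have h2 := ProbabilityMeasure.limsup_measure_closed_le_of_tendsto hT (isClosed_Iic (a := y))
    have h3 : m (Iic y) < ENNReal.ofReal v := by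
      rw [← ENNReal.ofReal_toReal (measure_ne_top m (Iic y))]
      exact (ENNReal.ofReal_lt_ofReal_iff hv.1).2 h1
    filter_upwards [eventually_lt_of_limsup_lt (h2.trans_lt h3)] with n hn
    by_contra h
    push Not at h
    have h4 := le_mcdf (mn n) hv h
    have h5 := ENNReal.ofReal_le_ofReal h4
    rw [mcdf, ENNReal.ofReal_toReal (measure_ne_top _ _)] at h5
    exact absurd hn (not_lt.2 h5)
  · intro y hy
    have hcr : ContinuousWithinAt (cdfInv (mcdf m)) (Ioo v 1) v :=
      hcont.mono (Ioo_subset_Ioo_left hv.1.le)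
    have hne : (nhdsWithin v (Ioo v 1)).NeBot := left_nhdsWithin_Ioo_neBot hv.2
    obtain ⟨y', hy1, hy2⟩ := exists_between hy
    have key : ∀ y', cdfInv (mcdf m) v < y' → ∀ᶠ n in atTop, cdfInv (mcdf (mn n)) v ≤ y' := by
      intro y hy
      obtain ⟨w, hwy, hw⟩ := ((hcr.eventually_lt_const hy).and eventually_mem_nhdsWithin).exists
      have hw0 : w ∈ Ioo (0:ℝ) 1 := ⟨hv.1.trans hw.1, hw.2⟩
      have h1 := le_mcdf m hw0 le_rfl
      have h3 : ENNReal.ofReal v < m (Iio y) := by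
        calc ENNReal.ofReal v < ENNReal.ofReal w := (ENNReal.ofReal_lt_ofReal_iff hw0.1).2 hw.1
          _ ≤ m (Iic (cdfInv (mcdf m) w)) := by
            rw [← ENNReal.ofReal_toReal (measure_ne_top m (Iic (cdfInv (mcdf m) w)))]
            exact ENNReal.ofReal_le_ofReal h1
          _ ≤ m (Iio y) := measure_mono (Iic_subset_Iio.2 hwy)
      have h2 := ProbabilityMeasure.le_liminf_measure_open_of_tendsto hT (isOpen_Iio (a := y))
      filter_upwards [eventually_lt_of_lt_liminf (h3.trans_le h2)] with n hn
      apply cdfInv_le (mn n) hv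
      have h4 : ENNReal.ofReal v ≤ mn n (Iic y) :=
        hn.le.trans (measure_mono Iio_subset_Iic_self)
      exact (ENNReal.ofReal_le_iff_le_toReal (measure_ne_top _ _)).1 h4
    filter_upwards [key y' hy1] with n hn
    exact hn.trans_lt hy2

/-- **Lower semicontinuity of the Wasserstein distance of order `p`** along weakly
convergent sequences of probability measures on ℝ, expressed through quantile
functions: `∫₀¹ |F⁻¹ − G⁻¹|^p ≤ liminf ∫₀¹ |Fₙ⁻¹ − Gₙ⁻¹|^p` in `[0,∞]`. -/
theorem wasserstein_p_lsc (p : ℝ) (hp : 1 ≤ p)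
    (mn m'n : ℕ → Measure ℝ) (m m' : Measure ℝ)
    (hmn : ∀ n, IsProbabilityMeasure (mn n))
    (hm'n : ∀ n, IsProbabilityMeasure (m'n n))
    (hm : IsProbabilityMeasure m) (hm' : IsProbabilityMeasure m')
    (hweak : ∀ f : ℝ → ℝ, Continuous f → (∃ M, ∀ x, |f x| ≤ M) →
      Tendsto (fun n => ∫ x, f x ∂(mn n)) atTop (nhds (∫ x, f x ∂m)))
    (hweak' : ∀ f : ℝ → ℝ, Continuous f → (∃ M, ∀ x, |f x| ≤ M) →
      Tendsto (fun n => ∫ x, f x ∂(m'n n)) atTop (nhds (∫ x, f x ∂m'))) :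
    ∫⁻ v in Ioo (0:ℝ) 1,
        ENNReal.ofReal (|cdfInv (mcdf m) v - cdfInv (mcdf m') v| ^ p)
      ≤ Filter.liminf (fun n =>
          ∫⁻ v in Ioo (0:ℝ) 1,
            ENNReal.ofReal (|cdfInv (mcdf (mn n)) v - cdfInv (mcdf (m'n n)) v| ^ p))
          atTop := by
  have hQ : ∀ μ : Measure ℝ, IsProbabilityMeasure μ →
      AEMeasurable (cdfInv (mcdf μ)) (volume.restrict (Ioo (0:ℝ) 1)) := fun μ _ =>
    aemeasurable_restrict_of_monotoneOn measurableSet_Ioo (cdfInv_mono μ)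
  refine le_trans (lintegral_mono_ae ?_) (lintegral_liminf_le' ?_)
  · filter_upwards [cdfInv_tendsto mn m hmn hm hweak, cdfInv_tendsto m'n m' hm'n hm' hweak']
      with v h1 h2
    have h3 := ENNReal.tendsto_ofReal ((h1.sub h2).abs.rpow_const (p := p)
      (Or.inr (zero_le_one.trans hp)))
    exact h3.liminf_eq.ge
  · intro n
    have h := (hQ _ (hmn n)).sub (hQ _ (hm'n n))
    exact ((continuous_abs.measurable.comp_aemeasurable h).pow_const p).ennreal_ofReal
end
end

section
/- Let (m_n)_{n≥1} and (m′_n)_{n≥1} be sequences of Borel probability measures on ℝ converging weakly to m and m′ respectively, and let F_n, G_n, F, G denote the CDFs of m_n, m′_n, m, m′. Then sup_{v∈(0,1)} |F⁻¹(v) − G⁻¹(v)| ≤ liminf_{n→∞} sup_{v∈(0,1)} |F_n⁻¹(v) − G_n⁻¹(v)|, where both sides are taken in [0,+∞]. -/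
open MeasureTheory Filter Set

noncomputable section

def mkPM (m : Measure ℝ) (hm : IsProbabilityMeasure m) : ProbabilityMeasure ℝ := ⟨m, hm⟩

theorem aux_weak (mn : ℕ → Measure ℝ) (m : Measure ℝ)
    (hmn : ∀ n, IsProbabilityMeasure (mn n)) (hm : IsProbabilityMeasure m)
    (hweak : ∀ f : ℝ → ℝ, Continuous f → (∃ M, ∀ x, |f x| ≤ M) →
      Tendsto (fun n => ∫ x, f x ∂(mn n)) atTop (nhds (∫ x, f x ∂m))) :
    Tendsto (fun n => (mkPM (mn n) (hmn n))) atTop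
      (nhds (mkPM (m) (hm))) := by
  rw [ProbabilityMeasure.tendsto_iff_forall_integral_tendsto]
  intro f
  exact hweak f f.continuous ⟨‖f‖, fun x => f.norm_coe_le_norm x⟩

theorem aux_up (mn : ℕ → Measure ℝ) (m : Measure ℝ)
    (hmn : ∀ n, IsProbabilityMeasure (mn n)) (hm : IsProbabilityMeasure m)
    (h : Tendsto (fun n => (mkPM (mn n) (hmn n))) atTop
      (nhds (mkPM (m) (hm)))) (a w : ℝ) (ha : mcdf m a < w) :
    ∀ᶠ n in atTop, mcdf (mn n) a < w := by
  have h1 := ProbabilityMeasure.limsup_measure_closed_le_of_tendsto h (isClosed_Iic (a := a))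
  have h2 : m (Iic a) < ENNReal.ofReal w :=
    (ENNReal.lt_ofReal_iff_toReal_lt (measure_ne_top _ _)).2 ha
  have h3 := eventually_lt_of_limsup_lt (lt_of_le_of_lt h1 h2)
  filter_upwards [h3] with n hn
  exact (ENNReal.lt_ofReal_iff_toReal_lt (measure_ne_top (mn n) _)).1 hn

theorem aux_low (mn : ℕ → Measure ℝ) (m : Measure ℝ)
    (hmn : ∀ n, IsProbabilityMeasure (mn n)) (hm : IsProbabilityMeasure m)
    (h : Tendsto (fun n => (mkPM (mn n) (hmn n))) atTop
      (nhds (mkPM (m) (hm)))) (y b w : ℝ) (hw : 0 ≤ w)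
    (hyb : y < b) (ha : w < mcdf m y) :
    ∀ᶠ n in atTop, w ≤ mcdf (mn n) b := by
  have h1 := ProbabilityMeasure.le_liminf_measure_open_of_tendsto h (isOpen_Iio (a := b))
  have h2 : ENNReal.ofReal w < m (Iio b) :=
    ((ENNReal.ofReal_lt_iff_lt_toReal hw (measure_ne_top _ _)).2 ha).trans_le
      (measure_mono (Iic_subset_Iio.2 hyb))
  have h3 := eventually_lt_of_lt_liminf (lt_of_lt_of_le h2 h1)
  filter_upwards [h3] with n hn
  have h4 : ENNReal.ofReal w < mn n (Iic b) := lt_of_lt_of_le hn (measure_mono Iio_subset_Iic_self)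
  exact ((ENNReal.ofReal_lt_iff_lt_toReal hw (measure_ne_top _ _)).1 h4).le

theorem mcdf_eq (m : Measure ℝ) (hm : IsProbabilityMeasure m) :
    mcdf m = ProbabilityTheory.cdf m := by
  ext x
  rw [ProbabilityTheory.cdf_eq_real]
  rfl

theorem aux_ne (m : Measure ℝ) (hm : IsProbabilityMeasure m) (v : ℝ) (hv : v < 1) :
    {x : ℝ | v ≤ mcdf m x}.Nonempty := by
  rw [mcdf_eq m hm]
  obtain ⟨x, hx⟩ := ((ProbabilityTheory.tendsto_cdf_atTop m).eventually_const_lt hv).exists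
  exact ⟨x, hx.le⟩

theorem aux_lt (m : Measure ℝ) (hm : IsProbabilityMeasure m) (a x v : ℝ) (h : mcdf m a < v)
    (h2 : v ≤ mcdf m x) : a ≤ x := by
  rw [mcdf_eq m hm] at *
  exact ((ProbabilityTheory.monotone_cdf m).reflect_lt (h.trans_le h2)).le

theorem aux_bdd (m : Measure ℝ) (hm : IsProbabilityMeasure m) (v : ℝ) (hv : 0 < v) :
    BddBelow {x : ℝ | v ≤ mcdf m x} := by
  obtain ⟨a, ha⟩ := ((ProbabilityTheory.tendsto_cdf_atBot m).eventually_lt_const hv).exists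
  rw [← mcdf_eq m hm] at ha
  exact ⟨a, fun x hx => aux_lt m hm a x v ha hx⟩

theorem aux_main (mn m'n : ℕ → Measure ℝ) (m m' : Measure ℝ)
    (hmn : ∀ n, IsProbabilityMeasure (mn n))
    (hm'n : ∀ n, IsProbabilityMeasure (m'n n))
    (hm : IsProbabilityMeasure m) (hm' : IsProbabilityMeasure m')
    (h : Tendsto (fun n => (mkPM (mn n) (hmn n))) atTop
      (nhds (mkPM (m) (hm))))
    (h' : Tendsto (fun n => (mkPM (m'n n) (hm'n n))) atTop
      (nhds (mkPM (m') (hm'))))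
    (v c : ℝ) (hv0 : 0 < v) (hv1 : v < 1)
    (hc : c < cdfInv (mcdf m) v - cdfInv (mcdf m') v) :
    ∀ᶠ n in atTop, ∃ w : Ioo (0:ℝ) 1,
      c ≤ cdfInv (mcdf (mn n)) w - cdfInv (mcdf (m'n n)) w := by
  obtain ⟨a, ha1, ha2⟩ := exists_between (lt_sub_iff_add_lt.1 hc)
  obtain ⟨b, hb1, hb2⟩ := exists_between (lt_sub_iff_add_lt'.2 ha1)
  have hFa : mcdf m a < v := by
    by_contra hcon
    exact absurd (csInf_le (aux_bdd m hm v hv0) (not_lt.1 hcon)) (not_le.2 ha2)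
  obtain ⟨y, hy, hyb⟩ := (csInf_lt_iff (aux_bdd m' hm' v hv0) (aux_ne m' hm' v hv1)).1 hb1
  obtain ⟨w, hw1, hw2⟩ := exists_between hFa
  have hw0 : 0 < w := lt_of_le_of_lt ENNReal.toReal_nonneg hw1
  filter_upwards [aux_up mn m hmn hm h a w hw1,
    aux_low m'n m' hm'n hm' h' y b w hw0.le hyb (hw2.trans_le hy)] with n hn1 hn2
  refine ⟨⟨w, hw0, hw2.trans hv1⟩, ?_⟩
  have e1 : a ≤ cdfInv (mcdf (mn n)) w :=
    le_csInf (aux_ne _ (hmn n) w (hw2.trans hv1)) fun x hx => aux_lt _ (hmn n) a x w hn1 hx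
  have e2 : cdfInv (mcdf (m'n n)) w ≤ b := csInf_le (aux_bdd _ (hm'n n) w hw0) hn2
  show c ≤ cdfInv (mcdf (mn n)) w - cdfInv (mcdf (m'n n)) w
  linarith

/-- **Lower semicontinuity of the ∞-Wasserstein distance** along weakly convergent
sequences of probability measures on ℝ:
`sup_{v∈(0,1)} |F⁻¹(v) − G⁻¹(v)| ≤ liminf sup_{v∈(0,1)} |Fₙ⁻¹(v) − Gₙ⁻¹(v)|` in `[0,∞]`. -/
theorem wasserstein_infty_lsc
    (mn m'n : ℕ → Measure ℝ) (m m' : Measure ℝ)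
    (hmn : ∀ n, IsProbabilityMeasure (mn n))
    (hm'n : ∀ n, IsProbabilityMeasure (m'n n))
    (hm : IsProbabilityMeasure m) (hm' : IsProbabilityMeasure m')
    (hweak : ∀ f : ℝ → ℝ, Continuous f → (∃ M, ∀ x, |f x| ≤ M) →
      Tendsto (fun n => ∫ x, f x ∂(mn n)) atTop (nhds (∫ x, f x ∂m)))
    (hweak' : ∀ f : ℝ → ℝ, Continuous f → (∃ M, ∀ x, |f x| ≤ M) →
      Tendsto (fun n => ∫ x, f x ∂(m'n n)) atTop (nhds (∫ x, f x ∂m'))) :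
    (⨆ v : Ioo (0:ℝ) 1,
        ENNReal.ofReal |cdfInv (mcdf m) v - cdfInv (mcdf m') v|)
      ≤ Filter.liminf (fun n =>
          ⨆ v : Ioo (0:ℝ) 1,
            ENNReal.ofReal |cdfInv (mcdf (mn n)) v - cdfInv (mcdf (m'n n)) v|)
          atTop := by
  have h := aux_weak mn m hmn hm hweak
  have h' := aux_weak m'n m' hm'n hm' hweak'
  refine iSup_le fun v => le_of_forall_lt fun d hd => ?_
  obtain ⟨c, hdc, hc⟩ := exists_between hd
  refine hdc.trans_le ?_
  have hctop : c ≠ ⊤ := ne_top_of_lt hc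
  rw [ENNReal.lt_ofReal_iff_toReal_lt hctop] at hc
  refine le_liminf_of_le (by isBoundedDefault) ?_
  rcases lt_abs.1 hc with h1 | h1
  · filter_upwards [aux_main mn m'n m m' hmn hm'n hm hm' h h' v _ v.2.1 v.2.2 h1] with n ⟨w, hw⟩
    refine le_trans ?_ (le_iSup _ w)
    exact ENNReal.le_ofReal_iff_toReal_le hctop (abs_nonneg _) |>.2 (hw.trans (le_abs_self _))
  · rw [neg_sub] at h1
    filter_upwards [aux_main m'n mn m' m hm'n hmn hm' hm h' h v _ v.2.1 v.2.2 h1] with n ⟨w, hw⟩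
    refine le_trans ?_ (le_iSup _ w)
    rw [abs_sub_comm]
    exact ENNReal.le_ofReal_iff_toReal_le hctop (abs_nonneg _) |>.2 (hw.trans (le_abs_self _))
end
end

section
/- Let p ∈ [1,∞). Let m and m′ be Borel probability measures on ℝ with CDFs F and G, and for n ≥ 1 let (x₁(n),…,x_n(n)) and (y₁(n),…,y_n(n)) be their discretisations of order n, i.e. x_k(n) := (n+1) ∫_{(2k−1)/(2(n+1))}^{(2k+1)/(2(n+1))} F⁻¹(w) dw and y_k(n) := (n+1) ∫_{(2k−1)/(2(n+1))}^{(2k+1)/(2(n+1))} G⁻¹(w) dw. Then for every n ≥ 1, (1/n) Σ_{k=1}^n |x_k(n) − y_k(n)|^p ≤ ((n+1)/n) · ∫₀¹ |F⁻¹(v) − G⁻¹(v)|^p dv, where the right-hand side is taken in [0,+∞]. -/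
open MeasureTheory Filter Set

noncomputable section

lemma aux_monotoneOn (m : Measure ℝ) [IsProbabilityMeasure m] (F : ℝ → ℝ)
    (hF : ∀ x : ℝ, F x = (m (Iic x)).toReal) : MonotoneOn (cdfInv F) (Ioo 0 1) := by
  have hFc : F = fun x => ProbabilityTheory.cdf m x := by
    funext x
    rw [hF, ProbabilityTheory.cdf_eq_real]
    rfl
  have hmono : Monotone F := by
    rw [hFc]; exact ProbabilityTheory.monotone_cdf m
  have h0 : Tendsto F atBot (nhds 0) := by
    rw [hFc]; exact ProbabilityTheory.tendsto_cdf_atBot m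
  have h1 : Tendsto F atTop (nhds 1) := by
    rw [hFc]; exact ProbabilityTheory.tendsto_cdf_atTop m
  intro u hu v hv huv
  unfold cdfInv
  apply csInf_le_csInf
  · obtain ⟨z, hz⟩ := (h0.eventually (gt_mem_nhds hu.1)).exists
    refine ⟨z, fun w hw => ?_⟩
    by_contra hlt
    have := hmono (not_le.mp hlt).le
    have hw' : u ≤ F w := hw
    linarith
  · obtain ⟨z, hz⟩ := (h1.eventually (lt_mem_nhds hv.2)).exists
    exact ⟨z, hz.le⟩
  · intro w hw
    exact le_trans huv hw

lemma aux_integrable (m : Measure ℝ) [IsProbabilityMeasure m] (F : ℝ → ℝ)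
    (hF : ∀ x : ℝ, F x = (m (Iic x)).toReal) (a b : ℝ) (ha : 0 < a) (hab : a ≤ b) (hb : b < 1) :
    IntervalIntegrable (cdfInv F) volume a b := by
  apply MonotoneOn.intervalIntegrable
  apply (aux_monotoneOn m F hF).mono
  rw [uIcc_of_le hab]
  exact fun z hz => ⟨lt_of_lt_of_le ha hz.1, lt_of_le_of_lt hz.2 hb⟩

lemma aux_jensen (p : ℝ) (hp : 1 ≤ p) (g : ℝ → ℝ) (a b c : ℝ) (hc : 0 < c)
    (hab : c * (b - a) = 1) (hg : IntervalIntegrable g volume a b) :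
    ENNReal.ofReal (|c * ∫ w in a..b, g w| ^ p) ≤
      ENNReal.ofReal c * ∫⁻ w in Ioc a b, ENNReal.ofReal (|g w| ^ p) := by
  have hlt : a < b := by
    by_contra h
    nlinarith
  set μ : Measure ℝ := ENNReal.ofReal c • volume.restrict (Ioc a b) with hμ
  have : IsProbabilityMeasure μ := by
    constructor
    rw [hμ, Measure.smul_apply, Measure.restrict_apply_univ, Real.volume_Ioc, smul_eq_mul,
      ← ENNReal.ofReal_mul hc.le, hab, ENNReal.ofReal_one]
  have hI : c * ∫ w in a..b, g w = ∫ w, g w ∂μ := by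
    rw [hμ, integral_smul_measure, ENNReal.toReal_ofReal hc.le,
      intervalIntegral.integral_of_le hlt.le, smul_eq_mul]
  have hgm : AEStronglyMeasurable g μ :=
    hg.1.aestronglyMeasurable.smul_measure _
  have hp0 : 0 < p := by linarith
  have key : eLpNorm g 1 μ ≤ eLpNorm g (ENNReal.ofReal p) μ := by
    apply eLpNorm_le_eLpNorm_of_exponent_le _ hgm
    simpa using hp
  rw [eLpNorm_one_eq_lintegral_enorm, eLpNorm_eq_lintegral_rpow_enorm_toReal
    (by simpa using hp0) ENNReal.ofReal_ne_top, ENNReal.toReal_ofReal hp0.le] at key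
  have hpt : ∀ t : ℝ, ENNReal.ofReal (|t| ^ p) = ‖t‖ₑ ^ p := fun t => by
    rw [← ENNReal.ofReal_rpow_of_nonneg (abs_nonneg t) hp0.le, Real.enorm_eq_ofReal_abs]
  simp only [hpt]
  rw [hI, ← smul_eq_mul, ← lintegral_smul_measure, ← hμ]
  calc ‖∫ w, g w ∂μ‖ₑ ^ p ≤ ((∫⁻ w, ‖g w‖ₑ ^ p ∂μ) ^ (1 / p)) ^ p :=
        ENNReal.rpow_le_rpow ((enorm_integral_le_lintegral_enorm _).trans key) hp0.le
    _ = _ := by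
        rw [← ENNReal.rpow_mul, one_div, inv_mul_cancel₀ hp0.ne', ENNReal.rpow_one]

/-- **Wasserstein bound for the discretisation**: if `x(n)` and `y(n)` are the order-`n`
discretisations of `m` and `m′`, then for every `n ≥ 1`,
`(1/n) Σ_{k=1}^n |x_k(n) − y_k(n)|^p ≤ ((n+1)/n) ∫₀¹ |F⁻¹(v) − G⁻¹(v)|^p dv` in `[0,∞]`. -/
theorem discretisation_wasserstein_bound (p : ℝ) (hp : 1 ≤ p)
    (m m' : Measure ℝ) [IsProbabilityMeasure m] [IsProbabilityMeasure m']
    (F G : ℝ → ℝ)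
    (hF : ∀ x : ℝ, F x = (m (Iic x)).toReal)
    (hG : ∀ x : ℝ, G x = (m' (Iic x)).toReal)
    (x y : ℕ → ℕ → ℝ)
    (hx : ∀ n k : ℕ, 1 ≤ k → k ≤ n →
      x n k = ((n : ℝ) + 1) *
        ∫ w in ((2 * (k : ℝ) - 1) / (2 * ((n : ℝ) + 1)))..
            ((2 * (k : ℝ) + 1) / (2 * ((n : ℝ) + 1))), cdfInv F w)
    (hy : ∀ n k : ℕ, 1 ≤ k → k ≤ n →
      y n k = ((n : ℝ) + 1) *
        ∫ w in ((2 * (k : ℝ) - 1) / (2 * ((n : ℝ) + 1)))..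
            ((2 * (k : ℝ) + 1) / (2 * ((n : ℝ) + 1))), cdfInv G w)
    (n : ℕ) (hn : 1 ≤ n) :
    ENNReal.ofReal ((1 / (n : ℝ)) * ∑ k ∈ Finset.Icc 1 n, |x n k - y n k| ^ p)
      ≤ ENNReal.ofReal (((n : ℝ) + 1) / (n : ℝ)) *
        ∫⁻ v in Ioo (0:ℝ) 1, ENNReal.ofReal (|cdfInv F v - cdfInv G v| ^ p) := by
  have hn0 : (0:ℝ) < n := by exact_mod_cast hn
  have hN : (0:ℝ) < (n:ℝ) + 1 := by linarith
  set A : ℕ → ℝ := fun k => (2 * (k : ℝ) - 1) / (2 * ((n : ℝ) + 1)) with hA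
  set B : ℕ → ℝ := fun k => (2 * (k : ℝ) + 1) / (2 * ((n : ℝ) + 1)) with hB
  have hA0 : ∀ k, 1 ≤ k → 0 < A k := fun k hk => by
    have : (1:ℝ) ≤ k := by exact_mod_cast hk
    exact div_pos (by linarith) (by linarith)
  have hB1 : ∀ k, k ≤ n → B k < 1 := fun k hk => by
    have : (k:ℝ) ≤ n := by exact_mod_cast hk
    simp only [hB]
    rw [div_lt_one (by linarith)]
    linarith
  have hAB : ∀ k, A k ≤ B k := fun k =>
    div_le_div_of_nonneg_right (by linarith) (by linarith)
  have hBA : ∀ j k, j < k → B j ≤ A k := fun j k hjk => by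
    have : (j:ℝ) + 1 ≤ k := by exact_mod_cast hjk
    exact div_le_div_of_nonneg_right (by linarith) (by linarith)
  set φ : ℝ → ENNReal := fun v => ENNReal.ofReal (|cdfInv F v - cdfInv G v| ^ p) with hφ
  have hterm : ∀ k ∈ Finset.Icc 1 n, ENNReal.ofReal (|x n k - y n k| ^ p) ≤
      ENNReal.ofReal ((n:ℝ) + 1) * ∫⁻ v in Ioc (A k) (B k), φ v := by
    intro k hk
    rw [Finset.mem_Icc] at hk
    have iF := aux_integrable m F hF (A k) (B k) (hA0 k hk.1) (hAB k) (hB1 k hk.2)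
    have iG := aux_integrable m' G hG (A k) (B k) (hA0 k hk.1) (hAB k) (hB1 k hk.2)
    have hxy : x n k - y n k =
        ((n:ℝ) + 1) * ∫ w in (A k)..(B k), (cdfInv F w - cdfInv G w) := by
      rw [intervalIntegral.integral_sub iF iG, mul_sub, hx n k hk.1 hk.2, hy n k hk.1 hk.2]
    rw [hxy]
    refine aux_jensen p hp _ _ _ _ hN ?_ (iF.sub iG)
    simp only [hA, hB]
    field_simp
    ring
  have hdisj : Set.PairwiseDisjoint (↑(Finset.Icc 1 n)) (fun k => Ioc (A k) (B k)) := by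
    intro j _ k _ hjk
    rw [Function.onFun, Set.disjoint_left]
    intro z hz hz'
    rcases lt_or_gt_of_ne hjk with h | h
    · have := hBA j k h
      linarith [hz.2, hz'.1]
    · have := hBA k j h
      linarith [hz.1, hz'.2]
  have hsum : ∑ k ∈ Finset.Icc 1 n, ∫⁻ v in Ioc (A k) (B k), φ v ≤ ∫⁻ v in Ioo (0:ℝ) 1, φ v := by
    rw [← lintegral_biUnion_finset hdisj (fun k _ => measurableSet_Ioc)]
    apply lintegral_mono_set
    intro z hz
    simp only [mem_iUnion, Finset.mem_Icc] at hz
    obtain ⟨k, hk, hz⟩ := hz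
    exact ⟨(hA0 k hk.1).trans hz.1, lt_of_le_of_lt hz.2 (hB1 k hk.2)⟩
  rw [ENNReal.ofReal_mul (by positivity), ENNReal.ofReal_sum_of_nonneg (fun k _ => by positivity)]
  calc _ ≤ ENNReal.ofReal (1 / (n:ℝ)) * ∑ k ∈ Finset.Icc 1 n,
        (ENNReal.ofReal ((n:ℝ) + 1) * ∫⁻ v in Ioc (A k) (B k), φ v) := by
        gcongr with k hk
        exact hterm k hk
    _ = ENNReal.ofReal (((n : ℝ) + 1) / (n : ℝ)) *
        ∑ k ∈ Finset.Icc 1 n, ∫⁻ v in Ioc (A k) (B k), φ v := by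
        rw [← Finset.mul_sum, ← mul_assoc, ← ENNReal.ofReal_mul (by positivity)]
        congr 2
        ring
    _ ≤ _ := by gcongr
end
end

section
/- Let N ≥ 1, let C₁, C_∞ ≥ 0, and let Φ : ℝ^N → ℝ^N satisfy ‖Φ(z) − Φ(z′)‖_{ℓ¹} ≤ C₁ ‖z − z′‖_{ℓ¹} and ‖Φ(z) − Φ(z′)‖_{ℓ^∞} ≤ C_∞ ‖z − z′‖_{ℓ^∞} for all z, z′ ∈ ℝ^N. Then for every p ∈ (1,∞) and all z, z′ ∈ ℝ^N, ‖Φ(z) − Φ(z′)‖_{ℓ^p} ≤ C₁^{1/p} · C_∞^{1−1/p} · ‖z − z′‖_{ℓ^p}. -/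
lemma aux_integrable_s18 (p : ℝ) (hp : 1 < p) (a M : ℝ) :
    IntervalIntegrable (fun t : ℝ => t ^ (p - 2) * max (a - t) 0) MeasureTheory.volume 0 M := by
  apply IntervalIntegrable.mul_continuousOn
  · exact intervalIntegral.intervalIntegrable_rpow' (by linarith)
  · fun_prop

lemma aux_integral (p : ℝ) (hp : 1 < p) (a M : ℝ) (ha : 0 ≤ a) (hM : a ≤ M) :
    ∫ t in (0:ℝ)..M, t ^ (p - 2) * max (a - t) 0 = a ^ p * (1 / (p - 1) - 1 / p) := by
  have i1 := aux_integrable_s18 p hp a a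
  have i2 := aux_integrable_s18 p hp a M
  rw [← intervalIntegral.integral_add_adjacent_intervals i1 (i1.symm.trans i2)]
  have e2 : ∫ t in a..M, t ^ (p - 2) * max (a - t) 0 = ∫ t in a..M, (0:ℝ) := by
    apply intervalIntegral.integral_congr
    intro t ht
    rw [Set.uIcc_of_le hM] at ht
    simp only
    rw [max_eq_right (by linarith [ht.1]), mul_zero]
  have e1 : ∫ t in (0:ℝ)..a, t ^ (p - 2) * max (a - t) 0
      = ∫ t in (0:ℝ)..a, (a * t ^ (p - 2) - t ^ (p - 1)) := by
    apply intervalIntegral.integral_congr_ae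
    refine Filter.Eventually.of_forall fun t ht => ?_
    rw [Set.uIoc_of_le ha] at ht
    rw [max_eq_left (by linarith [ht.2])]
    have : t ^ (p - 1) = t ^ (p - 2) * t := by
      rw [← Real.rpow_add_one ht.1.ne']; congr 1; ring
    rw [this]; ring
  rw [e1, e2, intervalIntegral.integral_sub, intervalIntegral.integral_const_mul,
    integral_rpow (Or.inl (by linarith)), integral_rpow (Or.inl (by linarith))]
  · rw [Real.zero_rpow (by linarith), Real.zero_rpow (by linarith)]
    have h1 : p - 2 + 1 = p - 1 := by ring
    have h2 : p - 1 + 1 = p := by ring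
    have h3 : a ^ p = a * a ^ (p - 1) := by
      rcases ha.eq_or_lt with h | h
      · rw [← h, Real.zero_rpow (by linarith)]; simp
      · rw [mul_comm, ← Real.rpow_add_one h.ne']; congr 1; ring
    rw [h1, h2, intervalIntegral.integral_zero, h3]
    ring
  · exact (intervalIntegral.intervalIntegrable_rpow' (by linarith)).const_mul _
  · exact intervalIntegral.intervalIntegrable_rpow' (by linarith)

lemma aux_major {N : ℕ} (p : ℝ) (hp : 1 < p) (a b : Fin N → ℝ) (K : ℝ)
    (ha : ∀ i, 0 ≤ a i) (hb : ∀ i, 0 ≤ b i)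
    (h : ∀ t : ℝ, 0 ≤ t → ∑ i, max (a i - t) 0 ≤ K * ∑ i, max (b i - t) 0) :
    ∑ i, a i ^ p ≤ K * ∑ i, b i ^ p := by
  set M := ∑ i, a i + ∑ i, b i with hMdef
  have hA : 0 ≤ ∑ i, a i := Finset.sum_nonneg fun i _ => ha i
  have hB : 0 ≤ ∑ i, b i := Finset.sum_nonneg fun i _ => hb i
  have haM : ∀ i, a i ≤ M := fun i => by
    have := Finset.single_le_sum (fun i _ => ha i) (Finset.mem_univ i)
    linarith
  have hbM : ∀ i, b i ≤ M := fun i => by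
    have := Finset.single_le_sum (fun i _ => hb i) (Finset.mem_univ i)
    linarith
  have key : ∫ t in (0:ℝ)..M, ∑ i, t ^ (p - 2) * max (a i - t) 0
      ≤ ∫ t in (0:ℝ)..M, K * ∑ i, t ^ (p - 2) * max (b i - t) 0 := by
    apply intervalIntegral.integral_mono_on (by linarith)
    · simp only [← Finset.mul_sum]
      apply IntervalIntegrable.mul_continuousOn
      · exact intervalIntegral.intervalIntegrable_rpow' (by linarith)
      · fun_prop
    · apply IntervalIntegrable.const_mul
      simp only [← Finset.mul_sum]
      apply IntervalIntegrable.mul_continuousOn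
      · exact intervalIntegral.intervalIntegrable_rpow' (by linarith)
      · fun_prop
    · intro t ht
      rw [← Finset.mul_sum, ← Finset.mul_sum]
      have := mul_le_mul_of_nonneg_left (h t ht.1) (Real.rpow_nonneg ht.1 (p - 2))
      linarith
  rw [intervalIntegral.integral_const_mul,
    intervalIntegral.integral_finsetSum fun i _ => aux_integrable_s18 p hp (a i) M,
    intervalIntegral.integral_finsetSum fun i _ => aux_integrable_s18 p hp (b i) M,
    Finset.sum_congr rfl fun i _ => aux_integral p hp (a i) M (ha i) (haM i),
    Finset.sum_congr rfl fun i _ => aux_integral p hp (b i) M (hb i) (hbM i),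
    ← Finset.sum_mul, ← Finset.sum_mul, ← mul_assoc] at key
  refine le_of_mul_le_mul_right key ?_
  have : 1 / p < 1 / (p - 1) := one_div_lt_one_div_of_lt (by linarith) (by linarith)
  linarith

/-- **Interpolation of Lipschitz bounds** (via Rademacher and Riesz–Thorin): if
`Φ : ℝ^N → ℝ^N` is `C₁`-Lipschitz for the `ℓ¹` norm and `C_∞`-Lipschitz for the
`ℓ^∞` norm, then it is `C₁^{1/p} C_∞^{1−1/p}`-Lipschitz for the `ℓ^p` norm,
for every `p ∈ (1,∞)`. -/
theorem lp_lipschitz_interpolation (N : ℕ) (hN : 1 ≤ N)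
    (C1 Cinf : ℝ) (hC1 : 0 ≤ C1) (hCinf : 0 ≤ Cinf)
    (Φ : (Fin N → ℝ) → (Fin N → ℝ))
    (h1 : ∀ z z' : Fin N → ℝ,
      ∑ i : Fin N, |Φ z i - Φ z' i| ≤ C1 * ∑ i : Fin N, |z i - z' i|)
    (hinf : ∀ z z' : Fin N → ℝ,
      (⨆ i : Fin N, |Φ z i - Φ z' i|) ≤ Cinf * ⨆ i : Fin N, |z i - z' i|)
    (p : ℝ) (hp : 1 < p) (z z' : Fin N → ℝ) :
    (∑ i : Fin N, |Φ z i - Φ z' i| ^ p) ^ (1 / p)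
      ≤ C1 ^ (1 / p) * Cinf ^ (1 - 1 / p) *
        (∑ i : Fin N, |z i - z' i| ^ p) ^ (1 / p) := by
  have hp0 : 0 < p := by linarith
  have hne : Nonempty (Fin N) := ⟨⟨0, hN⟩⟩
  have hsup : ∀ (x y : Fin N → ℝ) (t : ℝ), (∀ i, |x i - y i| ≤ t) →
      ∀ i, |Φ x i - Φ y i| ≤ Cinf * t := by
    intro x y t ht i
    calc |Φ x i - Φ y i| ≤ ⨆ i, |Φ x i - Φ y i| :=
          le_ciSup (f := fun i => |Φ x i - Φ y i|) (Set.finite_range _).bddAbove i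
      _ ≤ _ := hinf x y
      _ ≤ _ := mul_le_mul_of_nonneg_left (ciSup_le ht) hCinf
  have hS : 0 ≤ ∑ i : Fin N, |z i - z' i| ^ p :=
    Finset.sum_nonneg fun i _ => Real.rpow_nonneg (abs_nonneg _) _
  have main : ∑ i : Fin N, |Φ z i - Φ z' i| ^ p
      ≤ C1 * Cinf ^ (p - 1) * ∑ i : Fin N, |z i - z' i| ^ p := by
    rcases hCinf.eq_or_lt with h0 | hpos
    · have : ∑ i : Fin N, |Φ z i - Φ z' i| ^ p = 0 := by
        apply Finset.sum_eq_zero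
        intro i _
        have := hsup z z' (∑ j, |z j - z' j|)
          (fun i => Finset.single_le_sum (f := fun j => |z j - z' j|)
            (fun i _ => abs_nonneg _) (Finset.mem_univ i)) i
        rw [← h0, zero_mul] at this
        rw [le_antisymm this (abs_nonneg _), Real.zero_rpow hp0.ne']
      rw [this]
      positivity
    · have key := aux_major p hp (fun i => |Φ z i - Φ z' i| / Cinf) (fun i => |z i - z' i|)
        (C1 / Cinf) (fun i => by positivity) (fun i => abs_nonneg _) (by
          intro t ht
          set y : Fin N → ℝ := fun i => z' i + max (-t) (min (z i - z' i) t) with hy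
          have e1 : ∀ i, |z i - y i| = max (|z i - z' i| - t) 0 := by
            intro i
            simp only [hy]
            grind
          have e2 : ∀ i, |y i - z' i| ≤ t := by
            intro i
            simp only [hy]
            grind
          have f2 := hsup y z' t e2
          have f1 := h1 z y
          simp only [e1] at f1
          have f3 : ∑ i, max (|Φ z i - Φ z' i| / Cinf - t) 0
              ≤ ∑ i, |Φ z i - Φ y i| / Cinf := by
            apply Finset.sum_le_sum
            intro i _
            apply max_le
            · rw [sub_le_iff_le_add, div_le_iff₀ hpos, add_mul, div_mul_cancel₀ _ hpos.ne']
              have := abs_sub_le (Φ z i) (Φ y i) (Φ z' i)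
              linarith [f2 i]
            · positivity
          refine f3.trans ?_
          rw [← Finset.sum_div, div_mul_eq_mul_div]
          exact div_le_div_of_nonneg_right f1 hCinf)
      have e : ∀ i, (|Φ z i - Φ z' i| / Cinf) ^ p = |Φ z i - Φ z' i| ^ p / Cinf ^ p :=
        fun i => Real.div_rpow (abs_nonneg _) hCinf p
      simp only [e] at key
      rw [← Finset.sum_div, div_le_iff₀ (Real.rpow_pos_of_pos hpos p)] at key
      refine key.trans (le_of_eq ?_)
      rw [Real.rpow_sub_one hpos.ne']
      ring
  calc _ ≤ (C1 * Cinf ^ (p - 1) * ∑ i : Fin N, |z i - z' i| ^ p) ^ (1 / p) :=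
        Real.rpow_le_rpow (Finset.sum_nonneg fun i _ => Real.rpow_nonneg (abs_nonneg _) _)
          main (by positivity)
    _ = _ := by
        rw [Real.mul_rpow (by positivity) hS, Real.mul_rpow hC1 (by positivity),
          ← Real.rpow_mul hCinf]
        congr 3
        field_simp
end
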